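/- arXiv:math/0306274 — 5 statements merged into one kernel-verified Lean document; each statement's English description precedes it below -/
import Mathlib

section
/- Let h be a hive of size n, let (x,y,z) ∈ ℕ³ and let p, q ≥ 1 be integers with x + y + z + p + q = n. Then h(x+p, y, z+q) + h(x, y+q, z+p) ≥ h(x+p, y+q, z) + h(x, y, z+p+q), and the analogous inequalities obtained by cyclically permuting the roles of the three coordinates also hold. (In words: for any lattice parallelogram in tri_n with edges parallel to the edges of the triangular lattice, the sum of the entries of h at the two obtuse-angle vertices is greater than or equal to the sum of its entries at the two acute-angle vertices.) -/
/-!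
A `p × q` parallelogram is tiled by `p * q` unit rhombi of the same orientation. Summing their
rhombus inequalities telescopes, leaving only the four corners: each interior vertex and each
non-corner boundary vertex appears equally often on both sides. The telescoping is done in
`parallelogram_strip` (a `1 × q` strip of rhombi) and `parallelogram_of_rhombus` (`p` such strips).
Both use a single family of rhombus inequalities, so precomposing `h` with a cyclic permutation of
the coordinates yields all three orientations.
-/

/-- A hive of size `n`: an integer labeling of `tri_n = {(x,y,z) : x+y+z = n}`
(encoded as a function on all of `ℕ³`; only values on `tri_n` are constrained)
satisfying the three families of rhombus inequalities. -/
def IsHive (n : ℕ) (h : ℕ → ℕ → ℕ → ℤ) : Prop :=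
  ∀ x y z : ℕ, x + y + z + 2 = n →
    h (x+1) y (z+1) + h x (y+1) (z+1) ≥ h (x+1) (y+1) z + h x y (z+2) ∧
    h (x+1) (y+1) z + h (x+1) y (z+1) ≥ h x (y+1) (z+1) + h (x+2) y z ∧
    h x (y+1) (z+1) + h (x+1) (y+1) z ≥ h (x+1) y (z+1) + h x (y+2) z

/-- Induction along a strip: the `1 × (q+1)` strip based at `(x, y, z)` is the `1 × q` strip based at
`(x, y, z+1)` followed by the unit rhombus based at `(x, y+q, z)`. -/
theorem parallelogram_strip {n : ℕ} {f : ℕ → ℕ → ℕ → ℤ}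
    (hf : ∀ x y z : ℕ, x + y + z + 2 = n →
      f (x+1) (y+1) z + f x y (z+2) ≤ f (x+1) y (z+1) + f x (y+1) (z+1))
    (x y q : ℕ) : ∀ z : ℕ, x + y + z + 1 + q = n →
      f (x+1) (y+q) z + f x y (z+1+q) ≤ f (x+1) y (z+q) + f x (y+q) (z+1) := by
  induction q with
  | zero => intro z _; simp
  | succ q ih =>
    intro z hz
    have h1 := ih (z+1) (by omega)
    have h2 := hf x (y+q) z (by omega)
    rw [show z + 1 + (q + 1) = z + 1 + 1 + q by omega, show z + (q + 1) = z + 1 + q by omega,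
      show y + (q + 1) = y + q + 1 by omega]
    linarith

/-- Stacking strips: the `(p+1) × q` parallelogram based at `(x, y, z)` is the `p × q` one based at
`(x, y, z+1)` together with the `1 × q` strip based at `(x+p, y, z)`. -/
theorem parallelogram_of_rhombus {n : ℕ} {f : ℕ → ℕ → ℕ → ℤ}
    (hf : ∀ x y z : ℕ, x + y + z + 2 = n →
      f (x+1) (y+1) z + f x y (z+2) ≤ f (x+1) y (z+1) + f x (y+1) (z+1))
    (x y p q : ℕ) : ∀ z : ℕ, x + y + z + p + q = n →
      f (x+p) (y+q) z + f x y (z+p+q) ≤ f (x+p) y (z+q) + f x (y+q) (z+p) := by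
  induction p with
  | zero => intro z _; simp [add_comm]
  | succ p ih =>
    intro z hz
    have h1 := ih (z+1) (by omega)
    have h2 := parallelogram_strip hf (x+p) y q z (by omega)
    rw [show z + (p + 1) = z + 1 + p by omega, show x + (p + 1) = x + p + 1 by omega]
    rw [show z + 1 + q = z + q + 1 by omega] at h1 h2
    linarith

/-- Parallelogram inequalities: for any lattice parallelogram in `tri_n` with
edges parallel to the edges of the triangular lattice, the sum of the hive
entries at the two obtuse vertices dominates the sum at the two acute vertices.
The first conjunct is the stated inequality, and the other two are its images
under the two nontrivial cyclic permutations of the roles of the coordinates. -/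
theorem hive_parallelogram (n : ℕ) (h : ℕ → ℕ → ℕ → ℤ) (hh : IsHive n h)
    (x y z p q : ℕ) (hp : 1 ≤ p) (hq : 1 ≤ q) (hsum : x + y + z + p + q = n) :
    h (x+p) y (z+q) + h x (y+q) (z+p) ≥ h (x+p) (y+q) z + h x y (z+p+q) ∧
    h y (z+q) (x+p) + h (y+q) (z+p) x ≥ h (y+q) z (x+p) + h y (z+p+q) x ∧
    h (z+q) (x+p) y + h (z+p) x (y+q) ≥ h z (x+p) (y+q) + h (z+p+q) x y := by
  refine ⟨?_, ?_, ?_⟩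
  · exact parallelogram_of_rhombus (fun x y z e => (hh x y z e).1) x y p q z hsum
  · exact parallelogram_of_rhombus (f := fun a b c => h b c a)
      (fun a b c e => by linarith [(hh b c a (by omega)).2.2]) x y p q z hsum
  · exact parallelogram_of_rhombus (f := fun a b c => h c a b)
      (fun a b c e => by linarith [(hh c a b (by omega)).2.1]) x y p q z hsum
end

section
/- Let λ ∈ ℤⁿ be weakly decreasing. Then there is exactly one hive h of size n with h(n,0,0) = 0, Northwest-side differences equal to λ, and Northeast-side differences equal to (0, 0, …, 0). This unique hive satisfies h(x,y,z) = h(x, y+z, 0) for all (x,y,z) ∈ tri_n (it is constant along each line of constant first coordinate), and its South-side differences equal λ. Consequently, for weakly decreasing ν ∈ ℤⁿ, the set HIVE_{λ, (0,…,0)}^ν has exactly one element if ν = λ, and is empty otherwise. -/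
/-- Normalization pinning down the (irrelevant) values outside `tri_n`, so that a
hive is faithfully a function on `tri_n`. -/
def OnTri (n : ℕ) (h : ℕ → ℕ → ℕ → ℤ) : Prop :=
  ∀ x y z : ℕ, x + y + z ≠ n → h x y z = 0

/-- `l` is the vector of differences of `h` along the Northwest side,
read left-to-right: `l_k = h(n-k,k,0) - h(n-k+1,k-1,0)` for `k = 1, …, n`
(here `k = j.1 + 1` for `j : Fin n`). -/
def HasNWDiff (n : ℕ) (h : ℕ → ℕ → ℕ → ℤ) (l : Fin n → ℤ) : Prop :=
  ∀ j : Fin n, l j = h (n - (j.1+1)) (j.1+1) 0 - h (n - j.1) j.1 0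

/-- `l` is the vector of differences of `h` along the Northeast side:
`l_k = h(0,n-k,k) - h(0,n-k+1,k-1)` for `k = 1, …, n`. -/
def HasNEDiff (n : ℕ) (h : ℕ → ℕ → ℕ → ℤ) (l : Fin n → ℤ) : Prop :=
  ∀ j : Fin n, l j = h 0 (n - (j.1+1)) (j.1+1) - h 0 (n - j.1) j.1

/-- `l` is the vector of differences of `h` along the South side:
`l_k = h(n-k,0,k) - h(n-k+1,0,k-1)` for `k = 1, …, n`. -/
def HasSDiff (n : ℕ) (h : ℕ → ℕ → ℕ → ℤ) (l : Fin n → ℤ) : Prop :=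
  ∀ j : Fin n, l j = h (n - (j.1+1)) 0 (j.1+1) - h (n - j.1) 0 j.1

/-- `HIVE_{λμ}^ν`: the set of hives of size `n` with value `0` at `(n,0,0)`,
Northwest-side differences `λ`, Northeast-side differences `μ`, and South-side
differences `ν`. -/
def HiveSet (n : ℕ) (lam mu nu : Fin n → ℤ) : Set (ℕ → ℕ → ℕ → ℤ) :=
  {h | OnTri n h ∧ IsHive n h ∧ h n 0 0 = 0 ∧
    HasNWDiff n h lam ∧ HasNEDiff n h mu ∧ HasSDiff n h nu}

/-- The partial sum `λ₁ + ⋯ + λ_k`, with `λ` extended by zero beyond `n`. -/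
def partialSum (n : ℕ) (lam : Fin n → ℤ) (k : ℕ) : ℤ :=
  ∑ i ∈ Finset.range k, if hi : i < n then lam ⟨i, hi⟩ else 0

theorem partialSum_succ {n : ℕ} (lam : Fin n → ℤ) {k : ℕ} (hk : k < n) :
    partialSum n lam (k + 1) = partialSum n lam k + lam ⟨k, hk⟩ := by
  simp [partialSum, Finset.sum_range_succ, hk]

/-- The labeling of `tri_n` whose value at `(x,y,z)` is `λ₁ + ⋯ + λ_{y+z}`, extended by zero to
all of `ℕ³`. -/
def unitHive (n : ℕ) (lam : Fin n → ℤ) (x y z : ℕ) : ℤ :=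
  if x + y + z = n then partialSum n lam (y + z) else 0

theorem unitHive_of_eq {n : ℕ} (lam : Fin n → ℤ) {x y z : ℕ} (h : x + y + z = n) :
    unitHive n lam x y z = partialSum n lam (y + z) := if_pos h

theorem unitHive_onTri (n : ℕ) (lam : Fin n → ℤ) : OnTri n (unitHive n lam) :=
  fun _ _ _ h => if_neg h

theorem unitHive_isHive {n : ℕ} {lam : Fin n → ℤ} (hlam : Antitone lam) :
    IsHive n (unitHive n lam) := by
  intro x y z hn
  have e1 := unitHive_of_eq lam (x := x+1) (y := y) (z := z+1) (by omega)
  have e2 := unitHive_of_eq lam (x := x) (y := y+1) (z := z+1) (by omega)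
  have e3 := unitHive_of_eq lam (x := x+1) (y := y+1) (z := z) (by omega)
  have e4 := unitHive_of_eq lam (x := x) (y := y) (z := z+2) (by omega)
  have e5 := unitHive_of_eq lam (x := x+2) (y := y) (z := z) (by omega)
  have e6 := unitHive_of_eq lam (x := x) (y := y+2) (z := z) (by omega)
  rw [show y + (z + 1) = y + z + 1 by omega] at e1
  rw [show y + 1 + (z + 1) = y + z + 1 + 1 by omega] at e2
  rw [show y + 1 + z = y + z + 1 by omega] at e3
  rw [show y + (z + 2) = y + z + 1 + 1 by omega] at e4
  rw [show y + 2 + z = y + z + 1 + 1 by omega] at e6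
  have s1 := partialSum_succ lam (k := y + z) (by omega)
  have s2 := partialSum_succ lam (k := y + z + 1) (by omega)
  have hle : lam ⟨y + z + 1, by omega⟩ ≤ lam ⟨y + z, by omega⟩ :=
    hlam (Fin.mk_le_mk.2 (by omega))
  refine ⟨?_, ?_, ?_⟩ <;> linarith

theorem unitHive_corner (n : ℕ) (lam : Fin n → ℤ) : unitHive n lam n 0 0 = 0 := by
  simp [unitHive, partialSum]

theorem unitHive_nwDiff (n : ℕ) (lam : Fin n → ℤ) : HasNWDiff n (unitHive n lam) lam := by
  rintro ⟨j, hj⟩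
  dsimp only
  rw [unitHive_of_eq lam (by omega), unitHive_of_eq lam (by omega), add_zero, add_zero,
    partialSum_succ lam hj]
  ring

theorem unitHive_neDiff (n : ℕ) (lam : Fin n → ℤ) :
    HasNEDiff n (unitHive n lam) (fun _ => 0) := by
  rintro ⟨j, hj⟩
  dsimp only
  rw [unitHive_of_eq lam (by omega), unitHive_of_eq lam (by omega),
    show n - (j + 1) + (j + 1) = n - j + j by omega, sub_self]

/-- The differences along every line of constant first coordinate vanish: by (R1) and (R3), those
on the line `x + 1` are squeezed between those on the line `x`. -/
theorem IsHive.edge_eq {n : ℕ} {h : ℕ → ℕ → ℕ → ℤ} (hh : IsHive n h)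
    (hNE : HasNEDiff n h (fun _ => 0)) (x : ℕ) :
    ∀ y z : ℕ, x + y + z + 1 = n → h x y (z+1) = h x (y+1) z := by
  induction x with
  | zero =>
    intro y z hn
    have := hNE ⟨z, by omega⟩
    dsimp only at this
    rw [show n - (z + 1) = y by omega, show n - z = y + 1 by omega] at this
    linarith
  | succ x ih =>
    intro y z hn
    obtain ⟨r1, -, r3⟩ := hh x y z (by omega)
    have i1 : h x y (z+2) = h x (y+1) (z+1) := ih y (z+1) (by omega)
    have i2 : h x (y+1) (z+1) = h x (y+2) z := ih (y+1) z (by omega)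
    linarith

theorem IsHive.flat {n : ℕ} {h : ℕ → ℕ → ℕ → ℤ} (hh : IsHive n h)
    (hNE : HasNEDiff n h (fun _ => 0)) (x y z : ℕ) (hn : x + y + z = n) :
    h x y z = h x (y + z) 0 := by
  induction z generalizing y with
  | zero => rfl
  | succ z ih =>
    rw [hh.edge_eq hNE x y z (by omega), ih (y+1) (by omega),
      show y + 1 + z = y + (z + 1) by omega]

theorem IsHive.sDiff {n : ℕ} {h : ℕ → ℕ → ℕ → ℤ} (hh : IsHive n h)
    (hNE : HasNEDiff n h (fun _ => 0)) {lam : Fin n → ℤ} (hNW : HasNWDiff n h lam) :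
    HasSDiff n h lam := by
  rintro ⟨j, hj⟩
  have := hNW ⟨j, hj⟩
  dsimp only at this ⊢
  rw [hh.flat hNE _ 0 (j+1) (by omega), hh.flat hNE _ 0 j (by omega), zero_add, zero_add, this]

theorem nwSide_eq_partialSum {n : ℕ} {h : ℕ → ℕ → ℕ → ℤ} {lam : Fin n → ℤ} (h0 : h n 0 0 = 0)
    (hNW : HasNWDiff n h lam) (k : ℕ) (hk : k ≤ n) : h (n - k) k 0 = partialSum n lam k := by
  induction k with
  | zero => simp [partialSum, h0]
  | succ k ih =>
    have := hNW ⟨k, hk⟩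
    dsimp only at this
    rw [partialSum_succ lam hk, ← ih (by omega), this]
    ring

theorem eq_unitHive {n : ℕ} {h : ℕ → ℕ → ℕ → ℤ} {lam : Fin n → ℤ} (hT : OnTri n h)
    (hh : IsHive n h) (h0 : h n 0 0 = 0) (hNW : HasNWDiff n h lam)
    (hNE : HasNEDiff n h (fun _ => 0)) : h = unitHive n lam := by
  funext x y z
  by_cases hn : x + y + z = n
  · rw [unitHive_of_eq lam hn, hh.flat hNE x y z hn,
      ← nwSide_eq_partialSum h0 hNW (y + z) (by omega), show n - (y + z) = x by omega]
  · rw [hT x y z hn, unitHive_onTri n lam x y z hn]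


/-- The unit rule for hives: for weakly decreasing `λ` there is exactly one
hive of size `n` with lower-left entry `0`, NW differences `λ` and NE
differences `(0,…,0)`; it satisfies `h(x,y,z) = h(x,y+z,0)` (constant along
NW/SE lines) and has South differences `λ`.  Consequently `HIVE_{λ,(0,…,0)}^ν`
is a singleton when `ν = λ` and empty otherwise. -/
theorem unit_rule (n : ℕ) (lam : Fin n → ℤ) (hlam : Antitone lam) :
    (∃! h : ℕ → ℕ → ℕ → ℤ,
      OnTri n h ∧ IsHive n h ∧ h n 0 0 = 0 ∧ HasNWDiff n h lam ∧
        HasNEDiff n h (fun _ => 0)) ∧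
    (∀ h : ℕ → ℕ → ℕ → ℤ,
      OnTri n h → IsHive n h → h n 0 0 = 0 → HasNWDiff n h lam →
      HasNEDiff n h (fun _ => 0) →
        (∀ x y z : ℕ, x + y + z = n → h x y z = h x (y + z) 0) ∧
        HasSDiff n h lam) ∧
    (∀ nu : Fin n → ℤ, Antitone nu →
      (nu = lam → ∃ h, HiveSet n lam (fun _ => 0) nu = {h}) ∧
      (nu ≠ lam → HiveSet n lam (fun _ => 0) nu = ∅)) := by
  refine ⟨⟨unitHive n lam, ⟨unitHive_onTri n lam, unitHive_isHive hlam, unitHive_corner n lam,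
    unitHive_nwDiff n lam, unitHive_neDiff n lam⟩, ?_⟩, ?_, ?_⟩
  · rintro h ⟨hT, hh, h0, hNW, hNE⟩
    exact eq_unitHive hT hh h0 hNW hNE
  · intro h _ hh _ hNW hNE
    exact ⟨hh.flat hNE, hh.sDiff hNE hNW⟩
  · intro nu _
    constructor
    · rintro rfl
      refine ⟨unitHive n nu, Set.eq_singleton_iff_unique_mem.2 ⟨?_, ?_⟩⟩
      · exact ⟨unitHive_onTri n nu, unitHive_isHive hlam, unitHive_corner n nu,
          unitHive_nwDiff n nu, unitHive_neDiff n nu,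
          (unitHive_isHive hlam).sDiff (unitHive_neDiff n nu) (unitHive_nwDiff n nu)⟩
      · rintro h ⟨hT, hh, h0, hNW, hNE, -⟩
        exact eq_unitHive hT hh h0 hNW hNE
    · intro hne
      refine Set.eq_empty_iff_forall_notMem.2 ?_
      rintro h ⟨-, hh, -, hNW, hNE, hS⟩
      -- The South differences of `h` are both `nu` and `lam`.
      exact hne (funext fun j => (hS j).trans (hh.sDiff hNE hNW j).symm)
end

section
/- Let n ≥ 1 and 0 ≤ i ≤ n, and let h and h' be hives of size n whose Northeast-side differences both form the vector ω_i^n. Suppose h and h' agree on the Northwest side and on the South side of tri_n, i.e. h(n−k, k, 0) = h'(n−k, k, 0) and h(n−k, 0, k) = h'(n−k, 0, k) for all 0 ≤ k ≤ n. Then h = h'. (A hive whose Northeast-side differences form ω_i^n is uniquely determined by its entries on the other two sides.) -/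
/-- The fundamental weight `ω_i^m = (1,…,1,0,…,0)` with `i` ones and `m - i`
zeros: the `k`-th entry (`k = j.1 + 1`) is `1` iff `k ≤ i`. -/
def omegaVec (m i : ℕ) : Fin m → ℤ := fun j => if j.1 < i then 1 else 0

/-- Every row of constant `x` of a hive with Northeast-side differences `ω_i` has as differences
a string of ones followed by zeros. The bound `j` on the ones is allowed to exceed the length
of the row. -/
lemma row_diff_eq_indicator {n i : ℕ} {h : ℕ → ℕ → ℕ → ℤ} (hh : IsHive n h)
    (hNE : HasNEDiff n h (omegaVec n i)) (x : ℕ) :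
    ∃ j : ℕ, ∀ y z : ℕ, x + y + z + 1 = n →
      h x y (z + 1) - h x (y + 1) z = if z < j then 1 else 0 := by
  induction x with
  | zero =>
    refine ⟨i, fun y z hyz => ?_⟩
    have key := hNE ⟨z, by omega⟩
    have h1 : n - (z + 1) = y := by omega
    have h2 : n - z = y + 1 := by omega
    simp only [omegaVec, h1, h2] at key
    exact key.symm
  | succ x ih =>
    obtain ⟨j, hj⟩ := ih
    -- Interlacing leaves only the entry at `z = j - 1` free, and it is `0` or `1`.
    have bounds : ∀ y z : ℕ, x + 1 + y + z + 1 = n →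
        (if z + 1 < j then 1 else 0) ≤ h (x + 1) y (z + 1) - h (x + 1) (y + 1) z ∧
        h (x + 1) y (z + 1) - h (x + 1) (y + 1) z ≤ if z < j then 1 else 0 := by
      intro y z hyz
      obtain ⟨r1, -, r3⟩ := hh x y z (by omega)
      have e1 := hj y (z + 1) (by omega)
      have e2 := hj (y + 1) z (by omega)
      rw [← e1, ← e2]
      constructor <;> linarith
    by_cases hfree : ∃ y z : ℕ, x + 1 + y + z + 1 = n ∧ z + 1 = j ∧
        h (x + 1) y (z + 1) - h (x + 1) (y + 1) z = 1
    · obtain ⟨y₀, z₀, hn, hz, he⟩ := hfree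
      refine ⟨j, fun y z hyz => ?_⟩
      have b := bounds y z hyz
      by_cases hzz : z = z₀
      · obtain rfl : y = y₀ := by omega
        subst hzz
        rw [he, if_pos (by omega)]
      · split_ifs at b ⊢ <;> omega
    · refine ⟨j - 1, fun y z hyz => ?_⟩
      have b := bounds y z hyz
      have hne : z + 1 = j → h (x + 1) y (z + 1) - h (x + 1) (y + 1) z ≠ 1 :=
        fun hz he => hfree ⟨y, z, hyz, hz, he⟩
      split_ifs at b ⊢ <;> omega

lemma row_eq_add_min {n x j : ℕ} {h : ℕ → ℕ → ℕ → ℤ}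
    (hj : ∀ y z : ℕ, x + y + z + 1 = n →
      h x y (z + 1) - h x (y + 1) z = if z < j then 1 else 0) (z : ℕ) :
    ∀ y : ℕ, x + y + z = n → h x y z = h x (y + z) 0 + (min z j : ℕ) := by
  induction z with
  | zero => intro y _; simp
  | succ z ih =>
    intro y hyz
    have e := hj y z (by omega)
    have p := ih (y + 1) (by omega)
    rw [show y + 1 + z = y + (z + 1) by omega] at p
    split_ifs at e <;> omega

/-- A hive of size `n` whose NE-side differences form `ω_i^n` is uniquely
determined by its entries on the Northwest side and on the South side: if two
such hives agree at all `(n-k, k, 0)` and all `(n-k, 0, k)` for `0 ≤ k ≤ n`,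
then they agree on all of `tri_n`. -/
theorem hive_unique_given_two_sides (n : ℕ) (hn : 1 ≤ n) (i : ℕ) (hi : i ≤ n)
    (h h' : ℕ → ℕ → ℕ → ℤ) (hh : IsHive n h) (hh' : IsHive n h')
    (hNE : HasNEDiff n h (omegaVec n i)) (hNE' : HasNEDiff n h' (omegaVec n i))
    (hNW : ∀ k : ℕ, k ≤ n → h (n - k) k 0 = h' (n - k) k 0)
    (hS : ∀ k : ℕ, k ≤ n → h (n - k) 0 k = h' (n - k) 0 k) :
    ∀ x y z : ℕ, x + y + z = n → h x y z = h' x y z := by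
  intro x y z hxyz
  obtain ⟨j, hj⟩ := row_diff_eq_indicator hh hNE x
  obtain ⟨j', hj'⟩ := row_diff_eq_indicator hh' hNE' x
  have a := row_eq_add_min hj z y hxyz
  have a' := row_eq_add_min hj' z y hxyz
  have b := row_eq_add_min hj (y + z) 0 (by omega)
  have b' := row_eq_add_min hj' (y + z) 0 (by omega)
  have nw := hNW (y + z) (by omega)
  have s := hS (y + z) (by omega)
  rw [show n - (y + z) = x by omega] at nw s
  rw [Nat.zero_add] at b b'
  have hmin : min (y + z) j = min (y + z) j' := by
    have : ((min (y + z) j : ℕ) : ℤ) = (min (y + z) j' : ℕ) := by linarith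
    exact_mod_cast this
  have hmin' : min z j = min z j' := by omega
  rw [a, a', nw, hmin']
end

section
/- (Associativity of the hive ring.) Let λ, μ, ν, π ∈ ℤⁿ be weakly decreasing. Let A be the set of pairs (h₁, h₂) of hives of size n, both with value 0 at (n,0,0), such that h₁ has Northwest-side differences λ and Northeast-side differences μ, and h₂ has Northwest-side differences equal to the South-side differences of h₁, Northeast-side differences ν, and South-side differences π. Let B be the set of pairs (h₁, h₂) of hives of size n, both with value 0 at (n,0,0), such that h₁ has Northwest-side differences μ and Northeast-side differences ν, and h₂ has Northwest-side differences λ, Northeast-side differences equal to the South-side differences of h₁, and South-side differences π. Then A and B are finite and have the same cardinality. Equivalently, writing h_{λμ}^σ = |HIVE_{λμ}^σ|, one has Σ_σ h_{λμ}^σ h_{σν}^π = Σ_τ h_{μν}^τ h_{λτ}^π, where σ and τ run over weakly decreasing elements of ℤⁿ. -/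
/-- The South-side difference vector of `h`. -/
def sDiffOf (n : ℕ) (h : ℕ → ℕ → ℕ → ℤ) : Fin n → ℤ :=
  fun j => h (n - (j.1+1)) 0 (j.1+1) - h (n - j.1) 0 j.1

/-- The set of pairs of hives computing `Σ_σ h_{λμ}^σ h_{σν}^π`: `h₁` has
NW differences `λ` and NE differences `μ`, and `h₂` has NW differences equal to
the South differences of `h₁`, NE differences `ν` and South differences `π`. -/
def PairSetA (n : ℕ) (lam mu nu pi : Fin n → ℤ) :
    Set ((ℕ → ℕ → ℕ → ℤ) × (ℕ → ℕ → ℕ → ℤ)) :=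
  {p | OnTri n p.1 ∧ IsHive n p.1 ∧ p.1 n 0 0 = 0 ∧
       OnTri n p.2 ∧ IsHive n p.2 ∧ p.2 n 0 0 = 0 ∧
       HasNWDiff n p.1 lam ∧ HasNEDiff n p.1 mu ∧
       HasNWDiff n p.2 (sDiffOf n p.1) ∧ HasNEDiff n p.2 nu ∧
       HasSDiff n p.2 pi}

/-- The set of pairs of hives computing `Σ_τ h_{μν}^τ h_{λτ}^π`: `h₁` has
NW differences `μ` and NE differences `ν`, and `h₂` has NW differences `λ`,
NE differences equal to the South differences of `h₁`, and South differences
`π`. -/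
def PairSetB (n : ℕ) (lam mu nu pi : Fin n → ℤ) :
    Set ((ℕ → ℕ → ℕ → ℤ) × (ℕ → ℕ → ℕ → ℤ)) :=
  {p | OnTri n p.1 ∧ IsHive n p.1 ∧ p.1 n 0 0 = 0 ∧
       OnTri n p.2 ∧ IsHive n p.2 ∧ p.2 n 0 0 = 0 ∧
       HasNWDiff n p.1 mu ∧ HasNEDiff n p.1 nu ∧
       HasNWDiff n p.2 lam ∧ HasNEDiff n p.2 (sDiffOf n p.1) ∧
       HasSDiff n p.2 pi}

/-! ### The octahedron recurrence -/

/-- The octahedron relation for a labeling `F p q r s` of the points with `p + q + r + s = n`. -/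
def Oct (n : ℕ) (F : ℕ → ℕ → ℕ → ℕ → ℤ) : Prop :=
  ∀ p q r s : ℕ, p + q + r + s + 2 = n →
    F p q (r+1) (s+1) + F (p+1) (q+1) r s =
      max (F (p+1) q (r+1) s + F p (q+1) r (s+1)) (F (p+1) q r (s+1) + F p (q+1) (r+1) s)

theorem Oct.swapPQ {n : ℕ} {F : ℕ → ℕ → ℕ → ℕ → ℤ} (hF : Oct n F) :
    Oct n (fun p q r s => F q p r s) := by
  intro p q r s h
  have := hF q p r s (by omega)
  grind

theorem Oct.swapRS {n : ℕ} {F : ℕ → ℕ → ℕ → ℕ → ℤ} (hF : Oct n F) :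
    Oct n (fun p q r s => F p q s r) := by
  intro p q r s h
  have := hF p q s r (by omega)
  grind

/-- The recurrence run backwards is again the octahedron recurrence. -/
theorem Oct.reverse {n : ℕ} {F : ℕ → ℕ → ℕ → ℕ → ℤ} (hF : Oct n F) :
    Oct n (fun p q r s => F r s p q) := by
  intro p q r s h
  have := hF r s p q (by omega)
  grind

/-- The two rhombus families with apex `P` whose planes contain the direction `PQ` propagate from
the starting faces. -/
theorem Oct.apexP {n : ℕ} {F : ℕ → ℕ → ℕ → ℕ → ℤ} (hF : Oct n F)
    (hR : ∀ p q r, p + q + r + 2 = n →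
      F (p+2) q r 0 + F p (q+1) (r+1) 0 ≤ F (p+1) (q+1) r 0 + F (p+1) q (r+1) 0)
    (hS : ∀ p q s, p + q + s + 2 = n →
      F (p+2) q 0 s + F p (q+1) 0 (s+1) ≤ F (p+1) (q+1) 0 s + F (p+1) q 0 (s+1))
    (t : ℕ) : ∀ p q r s : ℕ, r + s = t → p + q + r + s + 2 = n →
      F (p+2) q r s + F p (q+1) (r+1) s ≤ F (p+1) (q+1) r s + F (p+1) q (r+1) s ∧
      F (p+2) q r s + F p (q+1) r (s+1) ≤ F (p+1) (q+1) r s + F (p+1) q r (s+1) := by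
  induction t with
  | zero =>
    intro p q r s ht hn
    obtain rfl : r = 0 := by omega
    obtain rfl : s = 0 := by omega
    exact ⟨hR p q 0 (by omega), hS p q 0 (by omega)⟩
  | succ t ih =>
    intro p q r s ht hn
    constructor
    · rcases s with _ | s
      · exact hR p q r (by omega)
      · have h1 := ih p (q+1) r s (by omega) (by omega)
        have h2 := hF (p+1) q r s (by omega)
        have h3 := hF p (q+1) r s (by omega)
        grind
    · rcases r with _ | r
      · exact hS p q s (by omega)
      · have h1 := ih p (q+1) r s (by omega) (by omega)
        have h2 := hF (p+1) q r s (by omega)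
        have h3 := hF p (q+1) r s (by omega)
        grind

/-- All three rhombus families with apex `R` propagate from the face `s = 0`. -/
theorem Oct.apexR {n : ℕ} {F : ℕ → ℕ → ℕ → ℕ → ℤ} (hF : Oct n F)
    (hR : ∀ p q r, p + q + r + 2 = n →
      F p q (r+2) 0 + F (p+1) (q+1) r 0 ≤ F (p+1) q (r+1) 0 + F p (q+1) (r+1) 0)
    (s : ℕ) : ∀ p q r : ℕ, p + q + r + s + 2 = n →
      F p q (r+2) s + F (p+1) (q+1) r s ≤ F (p+1) q (r+1) s + F p (q+1) (r+1) s ∧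
      F p q (r+2) s + F (p+1) q r (s+1) ≤ F (p+1) q (r+1) s + F p q (r+1) (s+1) ∧
      F p q (r+2) s + F p (q+1) r (s+1) ≤ F p (q+1) (r+1) s + F p q (r+1) (s+1) := by
  induction s with
  | zero =>
    intro p q r hn
    have h1 := hR p q r (by omega)
    have h2 := hF p q r 0 (by omega)
    grind
  | succ s ih =>
    intro p q r hn
    have h1 : F p q (r+2) (s+1) + F (p+1) (q+1) r (s+1) ≤
        F (p+1) q (r+1) (s+1) + F p (q+1) (r+1) (s+1) := by
      have h2 := ih (p+1) q r (by omega)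
      have h3 := ih p (q+1) r (by omega)
      have h4 := hF p q (r+1) s (by omega)
      grind
    have h2 := hF p q r (s+1) (by omega)
    grind

/-- The octahedron recurrence turns hives on the faces `s = 0` and `r = 0` into hives on the faces
`p = 0` and `q = 0`. -/
theorem Oct.rhombi {n : ℕ} {F : ℕ → ℕ → ℕ → ℕ → ℤ} (hF : Oct n F)
    (h1 : IsHive n (fun x y z => F x z y 0)) (h2 : IsHive n (fun x y z => F x y 0 z)) :
    IsHive n (fun x y z => F 0 y x z) ∧ IsHive n (fun x y z => F x 0 y z) := by
  have hP := fun t => hF.apexP (fun p q r h => by have := h1 p r q (by omega); grind)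
    (fun p q s h => by have := h2 p q s (by omega); grind) t
  have hQ := fun t => hF.swapPQ.apexP (fun p q r h => by have := h1 q r p (by omega); grind)
    (fun p q s h => by have := h2 q p s (by omega); grind) t
  have hR := fun t => hF.apexR (fun p q r h => by have := h1 p r q (by omega); grind) t
  have hS := fun t => hF.swapRS.apexR (fun p q s h => by have := h2 p q s (by omega); grind) t
  constructor
  · intro x y z h
    have a1 := hQ _ y 0 x z rfl (by omega)
    have a2 := hF 0 y x z (by omega)
    have a3 := hR z 0 y x (by omega)
    have a4 := hS x 0 y z (by omega)
    grind
  · intro x y z h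
    have a1 := hP _ x 0 y z rfl (by omega)
    have a2 := hF x 0 y z (by omega)
    have a3 := hR z x 0 y (by omega)
    have a4 := hS y x 0 z (by omega)
    grind

/-- A labeling satisfying the octahedron relation is determined by the faces `s = 0`, `r = 0`. -/
theorem Oct.unique {n : ℕ} {F G : ℕ → ℕ → ℕ → ℕ → ℤ} (hF : Oct n F) (hG : Oct n G)
    (h1 : ∀ p q r, p + q + r = n → F p q r 0 = G p q r 0)
    (h2 : ∀ p q s, p + q + s = n → F p q 0 s = G p q 0 s)
    (t : ℕ) : ∀ p q r s : ℕ, r + s ≤ t → p + q + r + s = n → F p q r s = G p q r s := by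
  induction t with
  | zero =>
    intro p q r s ht hn
    obtain rfl : s = 0 := by omega
    exact h1 p q r (by omega)
  | succ t ih =>
    intro p q r s ht hn
    rcases s with _ | s
    · exact h1 p q r (by omega)
    rcases r with _ | r
    · exact h2 p q _ (by omega)
    have a1 := hF p q r s (by omega)
    have a2 := hG p q r s (by omega)
    have b1 := ih (p+1) (q+1) r s (by omega) (by omega)
    have b2 := ih (p+1) q (r+1) s (by omega) (by omega)
    have b3 := ih p (q+1) r (s+1) (by omega) (by omega)
    have b4 := ih (p+1) q r (s+1) (by omega) (by omega)
    have b5 := ih p (q+1) (r+1) s (by omega) (by omega)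
    rw [b1, b2, b3, b4, b5] at a1
    linarith

/-- The labeling of the tetrahedron generated by the octahedron recurrence from `h` on the face
`s = 0` and `k` on the face `r = 0`. On the common edge `r = s = 0` the value of `h` is taken. -/
def octExt (h k : ℕ → ℕ → ℕ → ℤ) : ℕ → ℕ → ℕ → ℕ → ℤ
  | p, q, r, 0 => h p r q
  | p, q, 0, s+1 => k p q (s+1)
  | p, q, r+1, s+1 =>
    max (octExt h k (p+1) q (r+1) s + octExt h k p (q+1) r (s+1))
      (octExt h k (p+1) q r (s+1) + octExt h k p (q+1) (r+1) s) - octExt h k (p+1) (q+1) r s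
  termination_by _ _ r s => r + s

theorem octExt_face_s (h k : ℕ → ℕ → ℕ → ℤ) (p q r : ℕ) : octExt h k p q r 0 = h p r q := by
  rw [octExt]

theorem octExt_face_r {h k : ℕ → ℕ → ℕ → ℤ} (hk : ∀ x z, h x 0 z = k x z 0) (p q s : ℕ) :
    octExt h k p q 0 s = k p q s := by
  rcases s with _ | s
  · rw [octExt, hk]
  · rw [octExt]

theorem octExt_oct (n : ℕ) (h k : ℕ → ℕ → ℕ → ℤ) : Oct n (octExt h k) := by
  intro p q r s _
  rw [octExt]
  ring

theorem octExt_off {n : ℕ} {h k : ℕ → ℕ → ℕ → ℤ} (hh : OnTri n h) (hk : OnTri n k)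
    (t : ℕ) : ∀ p q r s : ℕ, r + s ≤ t → p + q + r + s ≠ n → octExt h k p q r s = 0 := by
  induction t with
  | zero =>
    intro p q r s ht hn
    obtain rfl : s = 0 := by omega
    rw [octExt]
    exact hh _ _ _ (by omega)
  | succ t ih =>
    intro p q r s ht hn
    rcases s with _ | s
    · rw [octExt]
      exact hh _ _ _ (by omega)
    rcases r with _ | r
    · rw [octExt]
      exact hk _ _ _ (by omega)
    rw [octExt, ih (p+1) (q+1) r s (by omega) (by omega),
      ih (p+1) q (r+1) s (by omega) (by omega), ih p (q+1) r (s+1) (by omega) (by omega),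
      ih (p+1) q r (s+1) (by omega) (by omega), ih p (q+1) (r+1) s (by omega) (by omega)]
    simp

/-! ### Labelings of the tetrahedron and their faces -/

/-- The labelings of the tetrahedron (zero off it, and zero at the corner `P`) that satisfy the
octahedron relation, restrict to hives on the faces `s = 0` and `r = 0`, and have differences
`lam, mu, nu, pi` along the edges `PR, RQ, QS, PS`. -/
def tetSet (n : ℕ) (lam mu nu pi : Fin n → ℤ) : Set (ℕ → ℕ → ℕ → ℕ → ℤ) :=
  {F | (∀ p q r s, p + q + r + s ≠ n → F p q r s = 0) ∧ Oct n F ∧ F n 0 0 0 = 0 ∧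
    IsHive n (fun x y z => F x z y 0) ∧ IsHive n (fun x y z => F x y 0 z) ∧
    HasNWDiff n (fun x y z => F x z y 0) lam ∧ HasNEDiff n (fun x y z => F x z y 0) mu ∧
    HasNEDiff n (fun x y z => F x y 0 z) nu ∧ HasSDiff n (fun x y z => F x y 0 z) pi}

/-- Restriction to the faces `s = 0` and `r = 0`. -/
def resA (F : ℕ → ℕ → ℕ → ℕ → ℤ) : (ℕ → ℕ → ℕ → ℤ) × (ℕ → ℕ → ℕ → ℤ) :=
  (fun x y z => F x z y 0, fun x y z => F x y 0 z)

/-- Restriction to the faces `p = 0` and `q = 0`, the former shifted so as to vanish at its corner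
`R` (and cut off outside the triangle, where the shift would leave a nonzero constant). -/
def resB (n : ℕ) (F : ℕ → ℕ → ℕ → ℕ → ℤ) : (ℕ → ℕ → ℕ → ℤ) × (ℕ → ℕ → ℕ → ℤ) :=
  (fun x y z => if x + y + z = n then F 0 y x z - F 0 0 n 0 else 0, fun x y z => F x 0 y z)

theorem injOn_resA (n : ℕ) (lam mu nu pi : Fin n → ℤ) :
    Set.InjOn resA (tetSet n lam mu nu pi) := by
  rintro F ⟨hF0, hF, -⟩ G ⟨hG0, hG, -⟩ h
  simp only [resA, Prod.mk.injEq] at h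
  obtain ⟨h1, h2⟩ := h
  funext p q r s
  by_cases hn : p + q + r + s = n
  · exact hF.unique hG (fun p q r _ => congrFun (congrFun (congrFun h1 p) r) q)
      (fun p q s _ => congrFun (congrFun (congrFun h2 p) q) s) _ p q r s le_rfl hn
  · rw [hF0 _ _ _ _ hn, hG0 _ _ _ _ hn]

theorem injOn_resB (n : ℕ) (lam mu nu pi : Fin n → ℤ) :
    Set.InjOn (resB n) (tetSet n lam mu nu pi) := by
  rintro F ⟨hF0, hF, -⟩ G ⟨hG0, hG, -⟩ h
  simp only [resB, Prod.mk.injEq] at h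
  obtain ⟨h1, h2⟩ := h
  have h2' : ∀ x y z, F x 0 y z = G x 0 y z :=
    fun x y z => congrFun (congrFun (congrFun h2 x) y) z
  have h1' : ∀ x y z, x + y + z = n → F 0 y x z = G 0 y x z := by
    intro x y z hn
    have := congrFun (congrFun (congrFun h1 x) y) z
    simp only [hn, if_true, h2' 0 n 0] at this
    linarith
  funext p q r s
  by_cases hn : p + q + r + s = n
  · exact hF.reverse.unique hG.reverse (fun a b c _ => h2' c a b)
      (fun a b d _ => h1' a d b (by omega)) _ r s p q le_rfl (by omega)
  · rw [hF0 _ _ _ _ hn, hG0 _ _ _ _ hn]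

/-- Two functions of `k ≤ n` with the same successive differences and the same value at `0`
agree. -/
theorem eq_of_diff {n : ℕ} {a b : ℕ → ℤ} (h0 : a 0 = b 0)
    (h : ∀ j < n, a (j+1) - a j = b (j+1) - b j) : ∀ k ≤ n, a k = b k := by
  intro k
  induction k with
  | zero => exact fun _ => h0
  | succ k ih =>
    intro hk
    have := ih (by omega)
    have := h k (by omega)
    linarith

theorem image_resA (n : ℕ) (lam mu nu pi : Fin n → ℤ) :
    resA '' tetSet n lam mu nu pi = PairSetA n lam mu nu pi := by
  apply Set.Subset.antisymm
  · rintro _ ⟨F, ⟨hF0, hF, hz, h1, h2, hl, hm, hn, hp⟩, rfl⟩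
    refine ⟨fun x y z h => hF0 _ _ _ _ (by omega), h1, hz, fun x y z h => hF0 _ _ _ _ (by omega),
      h2, hz, hl, hm, fun j => rfl, hn, hp⟩
  · rintro ⟨h, k⟩ ⟨ho, hh, hz, ko, kh, kz, hl, hm, hs, hn, hp⟩
    dsimp only at ho hh hz ko kh kz hl hm hs hn hp
    have hc : ∀ x z, h x 0 z = k x z 0 := by
      intro x z
      by_cases hxz : x + z = n
      · have := eq_of_diff (n := n) (a := fun j => h (n - j) 0 j) (b := fun j => k (n - j) j 0)
          (by simp [hz, kz]) (fun j hj => hs ⟨j, hj⟩) z (by omega)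
        simpa [show n - z = x by omega] using this
      · rw [ho _ _ _ (by omega), ko _ _ _ (by omega)]
    have e1 : (fun x y z => octExt h k x z y 0) = h := by
      funext x y z; exact octExt_face_s h k x z y
    have e2 : (fun x y z => octExt h k x y 0 z) = k := by
      funext x y z; exact octExt_face_r hc x y z
    refine ⟨octExt h k, ⟨fun p q r s => octExt_off ho ko _ p q r s le_rfl, octExt_oct n h k, ?_, ?_⟩,
      ?_⟩
    · rw [octExt_face_s, hz]
    · rw [e1, e2]
      exact ⟨hh, kh, hl, hm, hn, hp⟩
    · rw [resA, e1, e2]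

theorem image_resB (n : ℕ) (lam mu nu pi : Fin n → ℤ) :
    resB n '' tetSet n lam mu nu pi = PairSetB n lam mu nu pi := by
  apply Set.Subset.antisymm
  · rintro _ ⟨F, ⟨hF0, hF, hz, h1, h2, hl, hm, hn, hp⟩, rfl⟩
    obtain ⟨h3, h4⟩ := hF.rhombi h1 h2
    refine ⟨fun x y z h => if_neg h, ?_, ?_, fun x y z h => hF0 _ _ _ _ (by omega), h4, hz,
      ?_, ?_, hl, ?_, hp⟩
    · intro x y z h
      have := h3 x y z h
      simp only [resB]
      rw [if_pos (by omega), if_pos (by omega), if_pos (by omega), if_pos (by omega),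
        if_pos (by omega), if_pos (by omega)]
      refine ⟨?_, ?_, ?_⟩ <;> linarith
    · simp [resB]
    · intro j
      have := hm j
      have := j.2
      simp only [resB]
      rw [if_pos (by omega), if_pos (by omega)]
      linarith
    · intro j
      have := hn j
      have := j.2
      simp only [resB]
      rw [if_pos (by omega), if_pos (by omega)]
      linarith
    · intro j
      have := j.2
      simp only [resB, sDiffOf]
      rw [if_pos (by omega), if_pos (by omega)]
      ring
  · rintro ⟨g, f⟩ ⟨go, gh, gz, fo, fh, fz, gl, gm, fl, fm, fp⟩
    dsimp only at go gh gz fo fh fz gl gm fl fm fp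
    -- The pair is re-read in the reversed tetrahedron, where `RS` is the starting edge.
    set h : ℕ → ℕ → ℕ → ℤ := fun x y z => f y x z with h_def
    set k : ℕ → ℕ → ℕ → ℤ := fun x y z => if x + y + z = n then g x z y + f 0 n 0 else 0 with k_def
    have ho : OnTri n h := fun x y z hn => fo _ _ _ (by omega)
    have ko : OnTri n k := fun x y z hn => if_neg hn
    have hc : ∀ x z, h x 0 z = k x z 0 := by
      intro x z
      by_cases hxz : x + z = n
      · have := eq_of_diff (n := n) (a := fun j => f 0 (n - j) j)
          (b := fun j => g (n - j) 0 j + f 0 n 0)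
          (by simp [gz]) (fun j hj => by
            have := fm ⟨j, hj⟩
            simp only [sDiffOf] at this
            linarith) z (by omega)
        simpa [h_def, k_def, hxz, show n - z = x by omega] using this
      · rw [ho _ _ _ (by omega), ko _ _ _ (by omega)]
    have e1 : ∀ x y z, octExt h k y z x 0 = f x y z := fun x y z => octExt_face_s h k y z x
    have e2 : ∀ x y z, x + y + z = n → octExt h k x z 0 y = g x y z + f 0 n 0 := by
      intro x y z hn
      rw [octExt_face_r hc, k_def]
      exact if_pos (by omega)
    have hoct := octExt_oct n h k
    have hr := hoct.rhombi
      (by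
        intro x y z hn
        have := fh y x z (by omega)
        simp only [e1]
        grind)
      (by
        intro x y z hn
        have := gh x z y (by omega)
        beta_reduce
        rw [e2 _ _ _ (by omega), e2 _ _ _ (by omega), e2 _ _ _ (by omega), e2 _ _ _ (by omega),
          e2 _ _ _ (by omega), e2 _ _ _ (by omega)]
        grind)
    obtain ⟨h3, h4⟩ := hr
    refine ⟨fun p q r s => octExt h k r s p q,
      ⟨fun p q r s hn => octExt_off ho ko _ r s p q le_rfl (by omega), hoct.reverse, ?_, ?_, ?_,
        ?_, ?_, ?_, ?_⟩, ?_⟩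
    · simp only [e1, fz]
    · intro x y z hn
      have := h4 y x z (by omega)
      grind
    · intro x y z hn
      have := h3 x z y (by omega)
      grind
    · intro j
      simp only [e1]
      exact fl j
    · intro j
      have := j.2
      have := gl j
      beta_reduce
      rw [e2 _ _ _ (by omega), e2 _ _ _ (by omega)]
      linarith
    · intro j
      have := j.2
      have := gm j
      beta_reduce
      rw [e2 _ _ _ (by omega), e2 _ _ _ (by omega)]
      linarith
    · intro j
      simp only [e1]
      exact fp j
    · simp only [resB, e1, Prod.mk.injEq, and_true]
      funext x y z
      split_ifs with hn
      · rw [e2 _ _ _ hn]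
        ring
      · exact (go _ _ _ hn).symm

/-! ### Finiteness -/

/-- Differences parallel to the Northwest side interlace from one line to the next, so a bound on
the side itself holds everywhere. -/
theorem IsHive.edge_bound {n : ℕ} {h : ℕ → ℕ → ℕ → ℤ} (hh : IsHive n h) {C : ℤ}
    (hC : ∀ x y, x + y + 1 = n → |h x (y+1) 0 - h (x+1) y 0| ≤ C) (z : ℕ) :
    ∀ x y, x + y + z + 1 = n → |h x (y+1) z - h (x+1) y z| ≤ C := by
  induction z with
  | zero => exact fun x y hn => hC x y (by omega)
  | succ z ih =>
    intro x y hn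
    have h1 := hh x y z (by omega)
    have h2 := abs_le.1 (ih (x+1) y (by omega))
    have h3 := abs_le.1 (ih x (y+1) (by omega))
    rw [abs_le]
    constructor <;> linarith [h1.2.1, h1.2.2]

theorem IsHive.bound {n : ℕ} {h : ℕ → ℕ → ℕ → ℤ} (hh : IsHive n h) {C D : ℤ}
    (hC : ∀ x y, x + y + 1 = n → |h x (y+1) 0 - h (x+1) y 0| ≤ C)
    (hD : ∀ y z, y + z = n → |h 0 y z| ≤ D) (x : ℕ) :
    ∀ y z, x + y + z = n → |h x y z| ≤ D + x * C := by
  induction x with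
  | zero =>
    intro y z hn
    simpa using hD y z (by omega)
  | succ x ih =>
    intro y z hn
    have h1 := abs_le.1 (ih (y+1) z (by omega))
    have h2 := abs_le.1 (hh.edge_bound hC z x y (by omega))
    rw [abs_le]
    push_cast
    constructor <;> linarith

theorem finite_bounded (n : ℕ) (M : ℤ) :
    {h : ℕ → ℕ → ℕ → ℤ | OnTri n h ∧ ∀ x y z, x + y + z = n → |h x y z| ≤ M}.Finite := by
  -- A function supported on the triangle is determined by its restriction to a finite cube.
  let φ : (ℕ → ℕ → ℕ → ℤ) → (Fin (n+1) × Fin (n+1) × Fin (n+1) → ℤ) :=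
    fun h v => h v.1 v.2.1 v.2.2
  apply Set.Finite.of_finite_image (f := φ)
  · apply (Set.Finite.pi' (fun _ : Fin (n+1) × Fin (n+1) × Fin (n+1) =>
      Set.finite_Icc (-max M 0) (max M 0))).subset
    rintro _ ⟨h, ⟨h0, hM⟩, rfl⟩ ⟨x, y, z⟩
    simp only [φ, Set.mem_Icc, ← abs_le]
    by_cases hn : (x : ℕ) + y + z = n
    · exact (hM _ _ _ hn).trans (le_max_left _ _)
    · rw [h0 _ _ _ hn]
      simp
  · rintro h ⟨h0, -⟩ k ⟨k0, -⟩ hk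
    funext x y z
    by_cases hn : x + y + z = n
    · exact congrFun hk (⟨x, by omega⟩, ⟨y, by omega⟩, ⟨z, by omega⟩)
    · rw [h0 _ _ _ hn, k0 _ _ _ hn]

theorem abs_le_of_diff {n : ℕ} {a : ℕ → ℤ} {C D : ℤ} (h0 : |a 0| ≤ D)
    (h : ∀ j < n, |a (j+1) - a j| ≤ C) : ∀ k ≤ n, |a k| ≤ D + k * C := by
  intro k
  induction k with
  | zero => simpa using h0
  | succ k ih =>
    intro hk
    have h1 := abs_le.1 (ih (by omega))
    have h2 := abs_le.1 (h k (by omega))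
    rw [abs_le]
    push_cast
    constructor <;> linarith

theorem finite_pairSetA (n : ℕ) (lam mu nu pi : Fin n → ℤ) :
    (PairSetA n lam mu nu pi).Finite := by
  obtain ⟨C, hC0, h1, h2, h3, h4⟩ : ∃ C : ℤ, 0 ≤ C ∧ (∀ j, |lam j| ≤ C) ∧ (∀ j, |mu j| ≤ C) ∧
      (∀ j, |nu j| ≤ C) ∧ (∀ j, |pi j| ≤ C) := by
    have key : ∀ l : Fin n → ℤ, 0 ≤ ∑ j, |l j| ∧ ∀ j, |l j| ≤ ∑ j, |l j| := fun l =>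
      ⟨Finset.sum_nonneg fun j _ => abs_nonneg _,
        fun j => Finset.single_le_sum (f := fun j => |l j|) (fun j _ => abs_nonneg _)
          (Finset.mem_univ j)⟩
    have kl := key lam
    have km := key mu
    have kn := key nu
    have kp := key pi
    refine ⟨∑ j, |lam j| + ∑ j, |mu j| + ∑ j, |nu j| + ∑ j, |pi j|, by linarith, ?_, ?_, ?_, ?_⟩ <;>
      intro j
    · linarith [kl.2 j]
    · linarith [km.2 j]
    · linarith [kn.2 j]
    · linarith [kp.2 j]
  apply ((finite_bounded n (n * C + n * C + n * C)).prod
    (finite_bounded n (n * C + n * C + n * C))).subset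
  rintro ⟨h, k⟩ ⟨ho, hh, hz, ko, kh, kz, hl, hm, hs, hn, hp⟩
  dsimp only at ho hh hz ko kh kz hl hm hs hn hp
  have hmono : ∀ m : ℕ, m ≤ n → (m : ℤ) * C ≤ n * C := fun m hm =>
    mul_le_mul_of_nonneg_right (by exact_mod_cast hm) hC0
  have hnC : 0 ≤ (n : ℤ) * C := by positivity
  refine ⟨⟨ho, fun x y z hxyz => ?_⟩, ⟨ko, fun x y z hxyz => ?_⟩⟩
  · have b1 := abs_le_of_diff (n := n) (a := fun j => h (n - j) j 0) (C := C) (D := 0)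
      (by simp [hz]) (fun j hj => by
        rw [← hl ⟨j, hj⟩]
        exact h1 _) n le_rfl
    have b2 := abs_le_of_diff (n := n) (a := fun j => h 0 (n - j) j) (C := C) (D := n * C)
      (by simpa using b1) (fun j hj => by
        rw [← hm ⟨j, hj⟩]
        exact h2 _)
    have b3 := hh.bound (C := C) (D := n * C + n * C)
      (fun x y hxy => by
        have := hl ⟨y, by omega⟩
        simp only [show n - (y + 1) = x by omega, show n - y = x + 1 by omega] at this
        rw [← this]
        exact h1 _)
      (fun y z hyz => by
        have := b2 z (by omega)
        simp only [show n - z = y by omega] at this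
        linarith [hmono z (by omega)]) x y z hxyz
    linarith [hmono x (by omega)]
  · -- The prescribed sides of `k` are the Northeast and South ones: rotate the triangle.
    have kh' : IsHive n (fun x y z => k z x y) := by
      intro x y z hn
      have := kh z x y (by omega)
      grind
    have b2 := abs_le_of_diff (n := n) (a := fun j => k (n - j) 0 j) (C := C) (D := 0)
      (by simp [kz]) (fun j hj => by
        rw [← hp ⟨j, hj⟩]
        exact h4 _)
    have b3 := kh'.bound (C := C) (D := n * C)
      (fun x y hxy => by
        have := hn ⟨y, by omega⟩
        simp only [show n - (y + 1) = x by omega, show n - y = x + 1 by omega] at this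
        rw [← this]
        exact h3 _)
      (fun y z hyz => by
        have := b2 y (by omega)
        simp only [show n - y = z by omega] at this
        linarith [hmono y (by omega)]) y z x (by omega)
    linarith [hmono y (by omega)]

/-- Associativity of the hive ring:
`Σ_σ h_{λμ}^σ h_{σν}^π = Σ_τ h_{μν}^τ h_{λτ}^π`, expressed as an equality of
cardinalities of the two (finite) sets of pairs of hives. -/
theorem hive_ring_assoc (n : ℕ) (lam mu nu pi : Fin n → ℤ)
    (hlam : Antitone lam) (hmu : Antitone mu) (hnu : Antitone nu)
    (hpi : Antitone pi) :
    (PairSetA n lam mu nu pi).Finite ∧ (PairSetB n lam mu nu pi).Finite ∧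
    (PairSetA n lam mu nu pi).ncard = (PairSetB n lam mu nu pi).ncard := by
  have hA := finite_pairSetA n lam mu nu pi
  have hT : (tetSet n lam mu nu pi).Finite := by
    apply Set.Finite.of_finite_image _ (injOn_resA n lam mu nu pi)
    rwa [image_resA]
  refine ⟨hA, ?_, ?_⟩
  · rw [← image_resB]
    exact hT.image _
  · rw [← image_resA, ← image_resB, (injOn_resA n lam mu nu pi).ncard_image,
      (injOn_resB n lam mu nu pi).ncard_image]
end

section
/- (Excavation bijection.) Let λ, μ, ν, π ∈ ℤⁿ be weakly decreasing. Let A_ℝ be the set of pairs (H₁, H₂) of real hives of size n, both with value 0 at (n,0,0), such that H₁ has Northwest-side differences λ and Northeast-side differences μ, and H₂ has Northwest-side differences equal to the South-side differences of H₁, Northeast-side differences ν, and South-side differences π. Let B_ℝ be the set of pairs (H₁, H₂) of real hives of size n, both with value 0 at (n,0,0), such that H₁ has Northwest-side differences μ and Northeast-side differences ν, and H₂ has Northwest-side differences λ, Northeast-side differences equal to the South-side differences of H₁, and South-side differences π. Then there exists a bijection Φ : A_ℝ → B_ℝ such that: (a) each entry of the output pair Φ(H₁, H₂) is given by a maximum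 of finitely many ℤ-linear combinations of the entries of H₁ and H₂ (in particular, Φ is continuous and piecewise linear, viewing A_ℝ and B_ℝ as subsets of ℝ^{tri_n} × ℝ^{tri_n}); and (b) Φ restricts to a bijection between the pairs in A_ℝ in which both hives are integer-valued and the pairs in B_ℝ in which both hives are integer-valued. -/
/-!
Label the lattice points of the tetrahedron `x + y + z + w = n` by reals `T x y z w`. The two hives of
a pair in `A` fit together to labels of the faces `w = 0` and `y = 0`, and the two hives of a pair in
`B` to labels of the faces `x = 0` and `z = 0` (after adding a constant to the first one). The labels
of the first two faces extend uniquely to the tetrahedron by the tropical octahedron recurrence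

`T x (y+1) z (w+1) + T (x+1) y (z+1) w
  = max (T (x+1) (y+1) z w + T x y (z+1) (w+1)) (T x (y+1) (z+1) w + T (x+1) y z (w+1))`,

and `Φ` reads off the other two faces.

* Rhombus inequalities propagate through the recurrence (`IsOct.rhombus_y`, `IsOct.rhombus_x`), so
  the new faces are hives (`IsOct.hive`); their sides are edges of the tetrahedron, so their
  differences are the required ones.
* The recurrence is invariant under exchanging the two pairs of faces (`IsOct.flip`), so it can be run
  backwards; this gives bijectivity, and integrality is preserved in both directions since the
  recurrence has no division.
* The entries of `T` are maxima of integral linear forms in the initial values (`octOf_eq_sup'`). The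
  multiplicative octahedron recurrence, with indeterminates as initial values, is solved by
  contiguous minors of a matrix over the ring of Laurent polynomials (`laurent_oct`): this is Dodgson
  condensation (`cond_det`). At the point `exp (s d)` the multiplicative solution is within bounded
  factors of `exp (s T)` (`octOf_close`), as `log (exp a + exp b)` differs from `max a b` by at most
  `log 2`. For generic `d` the exponents of the Laurent polynomial give distinct growth rates in `s`,
  the largest of which therefore equals `T` (`growth_eq_sup'`), whatever the signs of the
  coefficients; continuity extends this to all `d`.
-/

/-- A real hive of size `n`: a real labeling of `tri_n = {(x,y,z) : x+y+z = n}`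
(encoded as a function on all of `ℕ³`; only values on `tri_n` are constrained)
satisfying the three families of rhombus inequalities. -/
def IsRealHive (n : ℕ) (h : ℕ → ℕ → ℕ → ℝ) : Prop :=
  ∀ x y z : ℕ, x + y + z + 2 = n →
    h (x+1) y (z+1) + h x (y+1) (z+1) ≥ h (x+1) (y+1) z + h x y (z+2) ∧
    h (x+1) (y+1) z + h (x+1) y (z+1) ≥ h x (y+1) (z+1) + h (x+2) y z ∧
    h x (y+1) (z+1) + h (x+1) (y+1) z ≥ h (x+1) y (z+1) + h x (y+2) z

/-- Normalization pinning down the (irrelevant) values outside `tri_n`, so that a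
real hive is faithfully a point of `ℝ^{tri_n}`. -/
def ROnTri (n : ℕ) (h : ℕ → ℕ → ℕ → ℝ) : Prop :=
  ∀ x y z : ℕ, x + y + z ≠ n → h x y z = 0

/-- Northwest-side differences: `l_k = h(n-k,k,0) - h(n-k+1,k-1,0)`, `k = 1..n`. -/
def RHasNWDiff (n : ℕ) (h : ℕ → ℕ → ℕ → ℝ) (l : Fin n → ℝ) : Prop :=
  ∀ j : Fin n, l j = h (n - (j.1+1)) (j.1+1) 0 - h (n - j.1) j.1 0

/-- Northeast-side differences: `l_k = h(0,n-k,k) - h(0,n-k+1,k-1)`, `k = 1..n`. -/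
def RHasNEDiff (n : ℕ) (h : ℕ → ℕ → ℕ → ℝ) (l : Fin n → ℝ) : Prop :=
  ∀ j : Fin n, l j = h 0 (n - (j.1+1)) (j.1+1) - h 0 (n - j.1) j.1

/-- South-side differences: `l_k = h(n-k,0,k) - h(n-k+1,0,k-1)`, `k = 1..n`. -/
def RHasSDiff (n : ℕ) (h : ℕ → ℕ → ℕ → ℝ) (l : Fin n → ℝ) : Prop :=
  ∀ j : Fin n, l j = h (n - (j.1+1)) 0 (j.1+1) - h (n - j.1) 0 j.1

/-- The South-side difference vector of `h`. -/
def rSDiffOf (n : ℕ) (h : ℕ → ℕ → ℕ → ℝ) : Fin n → ℝ :=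
  fun j => h (n - (j.1+1)) 0 (j.1+1) - h (n - j.1) 0 j.1

/-- `A_ℝ`: pairs `(H₁, H₂)` of real hives labeling the top two faces of the
tetrahedron: `H₁` has NW differences `λ` and NE differences `μ`; `H₂` has NW
differences equal to the South differences of `H₁`, NE differences `ν` and
South differences `π`. -/
def RPairSetA (n : ℕ) (lam mu nu pi : Fin n → ℤ) :
    Set ((ℕ → ℕ → ℕ → ℝ) × (ℕ → ℕ → ℕ → ℝ)) :=
  {p | ROnTri n p.1 ∧ IsRealHive n p.1 ∧ p.1 n 0 0 = 0 ∧
       ROnTri n p.2 ∧ IsRealHive n p.2 ∧ p.2 n 0 0 = 0 ∧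
       RHasNWDiff n p.1 (fun j => (lam j : ℝ)) ∧
       RHasNEDiff n p.1 (fun j => (mu j : ℝ)) ∧
       RHasNWDiff n p.2 (rSDiffOf n p.1) ∧
       RHasNEDiff n p.2 (fun j => (nu j : ℝ)) ∧
       RHasSDiff n p.2 (fun j => (pi j : ℝ))}

/-- `B_ℝ`: pairs `(H₁, H₂)` of real hives labeling the bottom two faces: `H₁`
has NW differences `μ` and NE differences `ν`; `H₂` has NW differences `λ`, NE
differences equal to the South differences of `H₁`, and South differences `π`. -/
def RPairSetB (n : ℕ) (lam mu nu pi : Fin n → ℤ) :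
    Set ((ℕ → ℕ → ℕ → ℝ) × (ℕ → ℕ → ℕ → ℝ)) :=
  {p | ROnTri n p.1 ∧ IsRealHive n p.1 ∧ p.1 n 0 0 = 0 ∧
       ROnTri n p.2 ∧ IsRealHive n p.2 ∧ p.2 n 0 0 = 0 ∧
       RHasNWDiff n p.1 (fun j => (mu j : ℝ)) ∧
       RHasNEDiff n p.1 (fun j => (nu j : ℝ)) ∧
       RHasNWDiff n p.2 (fun j => (lam j : ℝ)) ∧
       RHasNEDiff n p.2 (rSDiffOf n p.1) ∧
       RHasSDiff n p.2 (fun j => (pi j : ℝ))}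

/-- The lattice points of `tri_n`, as a finset of `ℕ³`. -/
def triPts (n : ℕ) : Finset (ℕ × ℕ × ℕ) :=
  (Finset.range (n+1) ×ˢ Finset.range (n+1) ×ˢ Finset.range (n+1)).filter
    (fun p => p.1 + p.2.1 + p.2.2 = n)

/-! ### Determinants and Dodgson condensation -/

open Matrix in
theorem cramer_single_fin {R : Type*} [CommRing R] {m : ℕ} (A : Matrix (Fin (m+1)) (Fin (m+1)) R)
    (i j : Fin (m+1)) : A.cramer (Pi.single i 1) j =
      (-1) ^ (i + j : ℕ) * (A.submatrix i.succAbove j.succAbove).det := by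
  rw [Matrix.cramer_eq_adjugate_mulVec, Matrix.mulVec_single_one, Matrix.col_apply,
    Matrix.adjugate_fin_succ_eq_det_submatrix]

open Matrix in
/-- **Desnanot-Jacobi identity** (Dodgson condensation): the determinant times the minor omitting
the first and last rows and columns is a quadratic expression in the four contiguous minors of size
one less. It follows from Cramer's rule, with no division, hence over every commutative ring. -/
theorem cond_det {R : Type*} [CommRing R] {m : ℕ} (A : Matrix (Fin (m+2)) (Fin (m+2)) R) :
    A.det * (A.submatrix (fun i : Fin m => i.castSucc.succ) (fun j : Fin m => j.castSucc.succ)).det =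
      (A.submatrix Fin.castSucc Fin.castSucc).det * (A.submatrix Fin.succ Fin.succ).det -
      (A.submatrix Fin.succ Fin.castSucc).det * (A.submatrix Fin.castSucc Fin.succ).det := by
  have h0l : (0 : Fin (m+2)) ≠ Fin.last _ := by simp [Fin.ext_iff]
  set e0 : Fin (m+2) → R := Pi.single 0 1 with he0
  set el : Fin (m+2) → R := Pi.single (Fin.last _) 1 with hel
  set B := A.updateCol (Fin.last _) el with hB
  -- apply the functional `cramer B · 0` to Cramer's rule `A *ᵥ cramer A e0 = det A • e0`
  have key : A.det * B.cramer e0 0 =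
      A.cramer e0 0 * B.det + A.cramer e0 (Fin.last _) * B.cramer (A.col (Fin.last _)) 0 := by
    have h1 := congrArg (fun v => B.cramer v 0) (Matrix.mulVec_cramer A e0)
    simp only [map_smul, Pi.smul_apply, smul_eq_mul] at h1
    rw [← h1, Matrix.mulVec_eq_sum, map_sum, Finset.sum_apply]
    simp only [op_smul_eq_smul, map_smul, Pi.smul_apply, smul_eq_mul]
    rw [Finset.sum_eq_add_of_mem (0 : Fin (m+2)) (Fin.last _) (Finset.mem_univ _)
      (Finset.mem_univ _) h0l]
    · have : B.cramer (Aᵀ 0) = Pi.single 0 B.det := by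
        apply Matrix.cramer_row_self
        intro j
        simp [hB, Matrix.transpose_apply]
      rw [this, Pi.single_eq_same]
      rfl
    · rintro i - ⟨hi0, hil⟩
      have : B.cramer (Aᵀ i) = Pi.single i B.det := by
        apply Matrix.cramer_row_self
        intro j
        simp [hB, Matrix.updateCol_ne hil, Matrix.transpose_apply]
      rw [this, Pi.single_eq_of_ne (Ne.symm hi0), mul_zero]
  have t1 : B.cramer e0 0 =
      (A.submatrix (fun i : Fin m => i.castSucc.succ) (fun j : Fin m => j.castSucc.succ)).det := by
    rw [cramer_single_fin]
    have hc : (B.submatrix (Fin.succAbove 0) (Fin.succAbove 0)).det =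
        ((A.submatrix Fin.succ Fin.succ).cramer (Pi.single (Fin.last _) 1) (Fin.last _)) := by
      rw [Matrix.cramer_apply]
      congr 1
      ext i j
      by_cases hj : j = Fin.last _
      · subst hj; simp [hB, hel, Pi.single_apply, Fin.ext_iff]
      · have : j.succ ≠ Fin.last _ := by
          intro h; apply hj; simpa [Fin.ext_iff] using h
        simp [hB, Matrix.updateCol_ne hj, Matrix.updateCol_ne this]
    rw [hc, cramer_single_fin]
    simp [← two_mul, pow_mul]
    rfl
  have t2 : A.cramer e0 0 = (A.submatrix Fin.succ Fin.succ).det := by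
    rw [cramer_single_fin]; simp [Fin.succAbove_zero]
  have t3 : B.det = (A.submatrix Fin.castSucc Fin.castSucc).det := by
    rw [hB, ← Matrix.cramer_apply, hel, cramer_single_fin]
    simp [Fin.succAbove_last, ← two_mul, pow_mul]
  have t4 : A.cramer e0 (Fin.last _) = (-1)^(m+1) * (A.submatrix Fin.succ Fin.castSucc).det := by
    rw [cramer_single_fin]; simp [Fin.succAbove_last]
  have t5 : B.cramer (A.col (Fin.last _)) 0 =
      (-1)^m * (A.submatrix Fin.castSucc Fin.succ).det := by
    rw [Matrix.cramer_apply, hB, Matrix.updateCol_comm _ h0l.symm, ← Matrix.cramer_apply, hel,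
      cramer_single_fin]
    have := Matrix.det_permute' (finRotate (m+1)).symm (A.submatrix Fin.castSucc Fin.succ)
    rw [Equiv.Perm.sign_symm, sign_finRotate] at this
    simp only [Fin.val_last, ← two_mul, pow_mul, Fin.succAbove_last]
    simp only [even_two, Even.neg_pow, one_pow, one_mul]
    push_cast at this
    rw [← this]
    congr 1
    ext i j
    refine Fin.cases ?_ (fun k => ?_) j
    · have : (finRotate (m+1)).symm 0 = Fin.last m := by
        rw [Equiv.symm_apply_eq, finRotate_last]
      simp [this]
    · have : (finRotate (m+1)).symm k.succ = k.castSucc := by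
        rw [Equiv.symm_apply_eq]; simp
      simp only [Matrix.submatrix_apply, this, id]
      rw [Matrix.updateCol_ne (by simp [Fin.ext_iff])]
      simp
  rw [t1, t2, t3, t4, t5] at key
  rw [key]
  have : ((-1 : R))^(m+1) * (-1)^m = -1 := by
    rw [pow_succ, mul_right_comm, ← pow_add, ← two_mul, pow_mul]; simp
  linear_combination ((A.submatrix Fin.succ Fin.castSucc).det *
    (A.submatrix Fin.castSucc Fin.succ).det) * this

/-! ### The multiplicative octahedron recurrence -/

/-- The sequence that vanishes below `b` and satisfies `c (r + b) = F r (c r, …, c (r + b - 1))`. -/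
def recSeq {L : Type*} [Zero L] (b : ℕ) (F : ℕ → (Fin b → L) → L) (k : ℕ) : L :=
  if _h : b ≤ k then F (k - b) (fun i => recSeq b F (k - b + i)) else 0
termination_by k
decreasing_by omega

theorem recSeq_add {L : Type*} [Zero L] (b : ℕ) (F : ℕ → (Fin b → L) → L) (r : ℕ) :
    recSeq b F (r + b) = F r (fun i => recSeq b F (r + i)) := by
  rw [recSeq]; simp

/-- Column `b` of the matrix whose minor on rows `r, …, r + b - 1` and columns `0, …, b - 1` is
`M r b`: its entries are solved for one after another from the Laplace expansion of these minors
along the last column, which only ever divides by a unit `M r b`. -/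
def minorCol {L : Type*} [CommRing L] (M : ℕ → ℕ → Lˣ) (b : ℕ) : ℕ → L :=
  recSeq b (fun r prev => (↑(M r b)⁻¹ : L) * ((M r (b+1) : L) -
    ∑ i : Fin b, (-1) ^ (i + b : ℕ) * prev i *
      (Matrix.of fun k j : Fin b =>
        minorCol M j (r + ((i.castSucc : Fin (b+1)).succAbove k : ℕ))).det))
termination_by b
decreasing_by omega

theorem det_minorCol {L : Type*} [CommRing L] (M : ℕ → ℕ → Lˣ) (hM : ∀ r, M r 0 = 1)
    (b r : ℕ) :
    (Matrix.of fun i j : Fin b => minorCol M j (r + i)).det = M r b := by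
  induction b generalizing r with
  | zero => simp [hM]
  | succ b ih =>
    rw [Matrix.det_succ_column _ (Fin.last b), Fin.sum_univ_castSucc]
    have hl : ((Matrix.of fun i j : Fin (b+1) => minorCol M j (r + i)).submatrix
        (Fin.last b).succAbove (Fin.last b).succAbove).det = M r b := by
      rw [← ih r]; congr 1; ext i j; simp [Fin.succAbove_last]
    rw [hl]
    have hc : minorCol M b (r + b) = (↑(M r b)⁻¹ : L) * ((M r (b+1) : L) -
        ∑ i : Fin b, (-1) ^ (i + b : ℕ) * minorCol M b (r + i) *
          (Matrix.of fun k j : Fin b =>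
            minorCol M j (r + ((i.castSucc : Fin (b+1)).succAbove k : ℕ))).det) := by
      rw [minorCol, recSeq_add]
    have hs : ∀ i : Fin b, ((Matrix.of fun i j : Fin (b+1) => minorCol M j (r + i)).submatrix
        (i.castSucc).succAbove (Fin.last b).succAbove) = (Matrix.of fun k j : Fin b =>
            minorCol M j (r + ((i.castSucc : Fin (b+1)).succAbove k : ℕ))) := by
      intro i; ext k j; simp [Fin.succAbove_last]
    simp only [hs, Matrix.of_apply, Fin.val_last, Fin.val_castSucc, ← two_mul, pow_mul]
    rw [hc]
    have hu : (↑(M r b)⁻¹ : L) * (M r b : L) = 1 := by simp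
    simp only [even_two, Even.neg_pow, one_pow, one_mul]
    linear_combination ((M r (b+1) : L) -
        ∑ i : Fin b, (-1) ^ (i + b : ℕ) * minorCol M b (r + i) *
          (Matrix.of fun k j : Fin b =>
            minorCol M j (r + ((i.castSucc : Fin (b+1)).succAbove k : ℕ))).det) * hu

/-- Minor of the matrix `X` on `m` consecutive rows from `r` and `m` consecutive columns from `c`. -/
def cMinor {L : Type*} [CommRing L] (X : ℕ → ℤ → L) (r : ℕ) (c : ℤ) (m : ℕ) : L :=
  (Matrix.of fun i j : Fin m => X (r + i) (c + (j : ℕ))).det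

/-- Condensation for contiguous minors, which is the octahedron recurrence up to signs. -/
theorem cMinor_cond {L : Type*} [CommRing L] (X : ℕ → ℤ → L) (r : ℕ) (c : ℤ) (m : ℕ) :
    cMinor X r c (m+2) * cMinor X (r+1) (c+1) m =
      cMinor X r c (m+1) * cMinor X (r+1) (c+1) (m+1) -
      cMinor X (r+1) c (m+1) * cMinor X r (c+1) (m+1) := by
  have := cond_det (Matrix.of fun i j : Fin (m+2) => X (r + i) (c + (j : ℕ)))
  convert this using 3
  all_goals try rfl
  all_goals (unfold cMinor; congr 1; ext i j; simp; congr 1 <;> ring)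

/-- **Laurent phenomenon.** Over any commutative ring, the multiplicative octahedron recurrence with
invertible initial values on the two faces `w = 0` (values `a`) and `y = 0` (values `b`) of the
tetrahedron `x + y + z + w = n` has a solution without any further division. The entry at
`(x, y, z, w)` is, up to sign and a factor depending on `z`, the minor of size `y + w` of a matrix
`X` on the rows from `x` and the columns from `-y`; the columns of `X` with nonnegative index are
determined by `b` and those with negative index by `a`. -/
theorem laurent_oct {L : Type*} [CommRing L] (n : ℕ) (a b : ℕ → ℕ → ℕ → Lˣ)
    (hab : ∀ x z, a x 0 z = b x z 0) :
    ∃ g : ℕ → ℕ → ℕ → ℕ → L,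
      (∀ x y z, x + y + z = n → g x y z 0 = a x y z) ∧
      (∀ x z w, x + z + w = n → g x 0 z w = b x z w) ∧
      (∀ x y z w, g x (y+1) z (w+1) * g (x+1) y (z+1) w =
        g (x+1) (y+1) z w * g x y (z+1) (w+1) + g x (y+1) (z+1) w * g (x+1) y z (w+1)) := by
  -- `β` is the common edge of the two faces; dividing by it makes the minors of size `0` equal to `1`
  let β : ℕ → Lˣ := fun z => a (n - z) 0 z
  let MV : ℕ → ℕ → Lˣ := fun r m => if m = 0 then 1 else b r (n - r - m) m / β (n - r - m)
  -- negative columns are numbered from right to left, so `MU` carries the sign of the reversal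
  let MU : ℕ → ℕ → Lˣ := fun r m => if m = 0 then 1 else
    (-1) ^ (r * m) * Units.map (Int.castRingHom L).toMonoidHom (Equiv.Perm.sign (Fin.revPerm (n := m)))
      * a r m (n - r - m) / β (n - r - m)
  let X : ℕ → ℤ → L := fun i c => if 0 ≤ c then minorCol MV c.toNat i
    else minorCol MU (-1 - c).toNat i
  have hV : ∀ r m, cMinor X r 0 m = MV r m := by
    intro r m
    rw [← det_minorCol MV (by simp [MV]) m r]
    unfold cMinor; congr 1; ext i j
    simp [X]
  have hU : ∀ r m : ℕ, cMinor X r (-(m : ℤ)) m =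
      (Int.cast (Equiv.Perm.sign (Fin.revPerm (n := m)) : ℤ) : L) * MU r m := by
    intro r m
    rw [← det_minorCol MU (by simp [MU]) m r, ← Matrix.det_permute']
    unfold cMinor; congr 1; ext i j
    have h2 : (-1 - (-(m : ℤ) + (j : ℕ))).toNat = m - (j + 1) := by omega
    simp [X, h2, Fin.val_rev]
  refine ⟨fun x y z w => (-1) ^ (x * y) * (β z : L) * cMinor X x (-(y : ℤ)) (y + w), ?_, ?_, ?_⟩
  · intro x y z h
    simp only [add_zero]
    rw [hU]
    have hz : n - x - y = z := by omega
    by_cases hy : y = 0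
    · subst hy
      have : n - z = x := by omega
      have h1 : (Fin.revPerm : Equiv.Perm (Fin 0)) = 1 := Subsingleton.elim _ _
      simp [MU, β, this, h1]
    · have hs : ((Int.cast (Equiv.Perm.sign (Fin.revPerm (n := y)) : ℤ) : L)) *
          (Int.cast (Equiv.Perm.sign (Fin.revPerm (n := y)) : ℤ) : L) = 1 := by
        rw [← Int.cast_mul, ← Units.val_mul, Int.units_mul_self]; simp
      have hp : ((-1 : L)) ^ (x * y) * (-1) ^ (x * y) = 1 := by
        rw [← mul_pow]; simp
      have hb : (β z : L) * (↑(β z)⁻¹ : L) = 1 := by simp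
      simp only [MU, hy, if_false, hz, div_eq_mul_inv]
      push_cast
      simp only [Units.coe_map, RingHom.toMonoidHom_eq_coe, MonoidHom.coe_coe, Int.coe_castRingHom]
      set s := (Int.cast (Equiv.Perm.sign (Fin.revPerm (n := y)) : ℤ) : L)
      calc _ = ((-1 : L) ^ (x * y) * (-1) ^ (x * y)) * (s * s) * ((β z : L) * (↑(β z)⁻¹ : L))
            * (a x y z : L) := by ring
        _ = _ := by rw [hs, hp, hb]; ring
  · intro x z w h
    simp only [mul_zero, pow_zero, one_mul, Nat.cast_zero, neg_zero, zero_add]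
    rw [hV]
    have hz : n - x - w = z := by omega
    by_cases hw : w = 0
    · subst hw
      have : n - z = x := by omega
      simp [MV, β, this, hab]
    · simp only [MV, hw, if_false, hz, div_eq_mul_inv]
      rw [← Units.val_mul]; congr 1
      rw [mul_comm (b x z w), mul_inv_cancel_left]
  · intro x y z w
    have h := cMinor_cond X x (-(y : ℤ) - 1) (y + w)
    have e1 : (y + 1) + (w + 1) = y + w + 2 := by ring
    have e2 : (y + 1) + w = y + w + 1 := by ring
    have e3 : y + (w + 1) = y + w + 1 := by ring
    have e4 : -((y + 1 : ℕ) : ℤ) = -(y : ℤ) - 1 := by push_cast; ring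
    have e5 : -(y : ℤ) - 1 + 1 = -(y : ℤ) := by ring
    rw [e5] at h
    simp only [e1, e2, e3, e4]
    have p1 : ((-1 : L)) ^ (x * (y+1)) * (-1) ^ ((x+1) * y) = (-1) ^ (x + y) := by
      rw [← pow_add, show x * (y+1) + (x+1) * y = 2 * (x * y) + (x + y) by ring, pow_add, pow_mul]
      simp
    have p2 : ((-1 : L)) ^ ((x+1) * (y+1)) * (-1) ^ (x * y) = - (-1) ^ (x + y) := by
      rw [← pow_add, show (x+1) * (y+1) + x * y = 2 * (x * y) + (x + y) + 1 by ring, pow_add,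
        pow_add, pow_mul]
      simp
    linear_combination (((-1 : L)) ^ (x * (y+1)) * (-1) ^ ((x+1) * y)) * (β z : L) * (β (z+1) : L) * h
      - (cMinor X (x+1) (-(y : ℤ) - 1) (y+w+1) * cMinor X x (-(y : ℤ)) (y+w+1)) *
        (β z : L) * (β (z+1) : L) * (p1 + p2)

/-! ### The tropical octahedron recurrence and hives -/

/-- The tropical octahedron recurrence on the tetrahedron `x + y + z + w = n`. -/
def IsOct (n : ℕ) (T : ℕ → ℕ → ℕ → ℕ → ℝ) : Prop :=
  ∀ x y z w, x + y + z + w + 2 = n →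
    T x (y+1) z (w+1) + T (x+1) y (z+1) w =
      max (T (x+1) (y+1) z w + T x y (z+1) (w+1)) (T x (y+1) (z+1) w + T (x+1) y z (w+1))

theorem IsOct.cases {n : ℕ} {T : ℕ → ℕ → ℕ → ℕ → ℝ} (hT : IsOct n T) (x y z w : ℕ)
    (h : x + y + z + w + 2 = n) :
    T (x+1) (y+1) z w + T x y (z+1) (w+1) ≤ T x (y+1) z (w+1) + T (x+1) y (z+1) w ∧
    T x (y+1) (z+1) w + T (x+1) y z (w+1) ≤ T x (y+1) z (w+1) + T (x+1) y (z+1) w ∧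
    (T x (y+1) z (w+1) + T (x+1) y (z+1) w = T (x+1) (y+1) z w + T x y (z+1) (w+1) ∨
     T x (y+1) z (w+1) + T (x+1) y (z+1) w = T x (y+1) (z+1) w + T (x+1) y z (w+1)) := by
  rw [hT x y z w h]
  exact ⟨le_max_left _ _, le_max_right _ _, max_choice _ _⟩

theorem IsOct.swap13 {n : ℕ} {T : ℕ → ℕ → ℕ → ℕ → ℝ} (hT : IsOct n T) :
    IsOct n (fun x y z w => T x w z y) := by
  intro x y z w h
  have := hT x w z y (by omega)
  simp only
  rw [this, max_comm, add_comm (T (x+1) (w+1) z y)]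
  congr 1; exact add_comm _ _

theorem IsOct.swap02 {n : ℕ} {T : ℕ → ℕ → ℕ → ℕ → ℝ} (hT : IsOct n T) :
    IsOct n (fun x y z w => T z y x w) := by
  intro x y z w h
  have := hT z y x w (by omega)
  simp only
  rw [this, max_comm]

/-- The symmetry exchanging the two faces `x = 0`, `z = 0` with the two faces `y = 0`, `w = 0`. -/
theorem IsOct.flip {n : ℕ} {T : ℕ → ℕ → ℕ → ℕ → ℝ} (hT : IsOct n T) :
    IsOct n (fun x y z w => T y x w z) := by
  intro x y z w h
  have := hT y x w z (by omega)
  simp only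
  rw [add_comm, this]
  congr 1; exact add_comm _ _

/-- The hive conditions are invariant under permutations of the three coordinates. -/
theorem IsRealHive.swap12 {n : ℕ} {h : ℕ → ℕ → ℕ → ℝ} (hh : IsRealHive n h) :
    IsRealHive n (fun x y z => h y x z) := by
  intro x y z e
  obtain ⟨h1, h2, h3⟩ := hh y x z (by omega)
  exact ⟨by linarith, by linarith, by linarith⟩

theorem IsRealHive.swap23 {n : ℕ} {h : ℕ → ℕ → ℕ → ℝ} (hh : IsRealHive n h) :
    IsRealHive n (fun x y z => h x z y) := by
  intro x y z e
  obtain ⟨h1, h2, h3⟩ := hh x z y (by omega)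
  exact ⟨by linarith, by linarith, by linarith⟩

/-- Rhombi with obtuse corner along `y` in the planes `w = const` stay nonnegative. -/
theorem IsOct.rhombus_y {n : ℕ} {T : ℕ → ℕ → ℕ → ℕ → ℝ} (hT : IsOct n T)
    (h0 : ∀ x y z, x + y + z + 2 = n →
      T (x+1) y (z+1) 0 + T x (y+2) z 0 ≤ T (x+1) (y+1) z 0 + T x (y+1) (z+1) 0)
    (w x y z : ℕ) (h : x + y + z + w + 2 = n) :
    T (x+1) y (z+1) w + T x (y+2) z w ≤ T (x+1) (y+1) z w + T x (y+1) (z+1) w := by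
  induction w generalizing x y z with
  | zero => exact h0 x y z (by omega)
  | succ w ih =>
    have d0 := ih (x+1) y z (by omega)
    have d2 := ih x y (z+1) (by omega)
    obtain ⟨a1, a2, -⟩ := hT.cases (x+1) y z w (by omega)
    obtain ⟨c1, c2, -⟩ := hT.cases x y (z+1) w (by omega)
    obtain ⟨-, -, b | b⟩ := hT.cases x (y+1) z w (by omega) <;>
    norm_num [add_assoc] at * <;> linarith

/-- Rhombi with obtuse corner along `x` in the planes `w = const` and `y = const` stay
nonnegative. -/
theorem IsOct.rhombus_x {n : ℕ} {T : ℕ → ℕ → ℕ → ℕ → ℝ} (hT : IsOct n T)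
    (h0 : ∀ x y z, x + y + z + 2 = n →
      T x (y+1) (z+1) 0 + T (x+2) y z 0 ≤ T (x+1) (y+1) z 0 + T (x+1) y (z+1) 0)
    (h1 : ∀ x z w, x + z + w + 2 = n →
      T x 0 (z+1) (w+1) + T (x+2) 0 z w ≤ T (x+1) 0 (z+1) w + T (x+1) 0 z (w+1))
    (N x y z w : ℕ) (hN : y + w ≤ N) (h : x + y + z + w + 2 = n) :
    T x (y+1) (z+1) w + T (x+2) y z w ≤ T (x+1) (y+1) z w + T (x+1) y (z+1) w ∧
    T x y (z+1) (w+1) + T (x+2) y z w ≤ T (x+1) y (z+1) w + T (x+1) y z (w+1) := by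
  induction N generalizing x y z w with
  | zero =>
    obtain rfl : y = 0 := by omega
    obtain rfl : w = 0 := by omega
    exact ⟨h0 x 0 z (by omega), h1 x z 0 (by omega)⟩
  | succ N ih =>
    constructor
    · rcases w with _ | w
      · exact h0 x y z (by omega)
      · obtain ⟨d1, d2⟩ := ih x y (z+1) w (by omega) (by omega)
        obtain ⟨a1, a2, -⟩ := hT.cases (x+1) y z w (by omega)
        obtain ⟨-, -, b | b⟩ := hT.cases x y (z+1) w (by omega) <;>
        norm_num [add_assoc] at * <;> linarith
    · rcases y with _ | y
      · exact h1 x z w (by omega)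
      · obtain ⟨d1, d2⟩ := ih x y (z+1) w (by omega) (by omega)
        obtain ⟨a1, a2, -⟩ := hT.cases (x+1) y z w (by omega)
        obtain ⟨-, -, b | b⟩ := hT.cases x y (z+1) w (by omega) <;>
        norm_num [add_assoc] at * <;> linarith

/-- The octahedron recurrence carries hives on the faces `w = 0` and `y = 0` to hives on the faces
`x = 0` and `z = 0`. -/
theorem IsOct.hive {n : ℕ} {T : ℕ → ℕ → ℕ → ℕ → ℝ} (hT : IsOct n T)
    (h1 : IsRealHive n (fun x y z => T x y z 0)) (h2 : IsRealHive n (fun x z w => T x 0 z w)) :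
    IsRealHive n (fun y z w => T 0 y z w) ∧ IsRealHive n (fun x y w => T x y 0 w) := by
  -- rhombi in the planes parallel to the faces, by direction of the obtuse corner
  have dy := fun x y z w (h : x + y + z + w + 2 = n) =>
    hT.rhombus_y (fun x y z e => (h1 x y z e).2.2.le.trans (by linarith)) w x y z h
  have dw := fun x y z w (h : x + y + z + w + 2 = n) =>
    hT.swap13.rhombus_y (fun x y z e => (h2 x z y (by omega)).1.le.trans (by linarith))
      y x w z (by omega)
  have dx := fun x y z w (h : x + y + z + w + 2 = n) =>
    hT.rhombus_x (fun x y z e => (h1 x y z e).2.1.le)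
      (fun x z w e => (h2 x z w e).2.1.le) _ x y z w le_rfl h
  have dz := fun x y z w (h : x + y + z + w + 2 = n) =>
    hT.swap02.rhombus_x
      (fun x y z e => by have := (h1 z y x (by omega)).1; linarith)
      (fun x z w e => by have := (h2 z x w (by omega)).2.2; linarith)
      _ z y x w le_rfl (by omega)
  constructor
  · intro y z w h
    obtain ⟨a1, a2, a3⟩ := hT.cases 0 y z w (by omega)
    have := dy 0 y z w (by omega)
    have := dw 0 y z w (by omega)
    obtain ⟨_, _⟩ := dz 0 y z w (by omega)
    simp only
    refine ⟨?_, ?_, ?_⟩ <;> rcases a3 with a3 | a3 <;> linarith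
  · intro x y w h
    obtain ⟨a1, a2, a3⟩ := hT.cases x y 0 w (by omega)
    have := dy x y 0 w (by omega)
    have := dw x y 0 w (by omega)
    obtain ⟨_, _⟩ := dx x y 0 w (by omega)
    simp only
    refine ⟨?_, ?_, ?_⟩ <;> rcases a3 with a3 | a3 <;> linarith

/-- A solution is determined by its values on the faces `w = 0` and `y = 0`. -/
theorem IsOct.unique {n : ℕ} {T U : ℕ → ℕ → ℕ → ℕ → ℝ} (hT : IsOct n T) (hU : IsOct n U)
    (h1 : ∀ x y z, x + y + z = n → T x y z 0 = U x y z 0)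
    (h2 : ∀ x z w, x + z + w = n → T x 0 z w = U x 0 z w)
    (x y z w : ℕ) (h : x + y + z + w = n) : T x y z w = U x y z w := by
  induction hN : y + w using Nat.strong_induction_on generalizing x y z w with
  | _ N ih =>
  rcases w with _ | w
  · exact h1 x y z (by omega)
  rcases y with _ | y
  · exact h2 x z (w+1) (by omega)
  have a := hT x y z w (by omega)
  have b := hU x y z w (by omega)
  rw [ih _ (by omega) (x+1) (y+1) z w (by omega) rfl,
    ih _ (by omega) x y (z+1) (w+1) (by omega) rfl,
    ih _ (by omega) x (y+1) (z+1) w (by omega) rfl,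
    ih _ (by omega) (x+1) y z (w+1) (by omega) rfl,
    ih _ (by omega) (x+1) y (z+1) w (by omega) rfl, ← b] at a
  linarith

/-- The recurrence contains no division: integrality propagates from the faces `w = 0`, `y = 0`. -/
theorem IsOct.integral {n : ℕ} {T : ℕ → ℕ → ℕ → ℕ → ℝ} (hT : IsOct n T)
    (h1 : ∀ x y z, x + y + z = n → ∃ a : ℤ, T x y z 0 = a)
    (h2 : ∀ x z w, x + z + w = n → ∃ a : ℤ, T x 0 z w = a)
    (x y z w : ℕ) (h : x + y + z + w = n) : ∃ a : ℤ, T x y z w = a := by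
  induction hN : y + w using Nat.strong_induction_on generalizing x y z w with
  | _ N ih =>
  rcases w with _ | w
  · exact h1 x y z (by omega)
  rcases y with _ | y
  · exact h2 x z (w+1) (by omega)
  have a := hT x y z w (by omega)
  obtain ⟨a1, e1⟩ := ih _ (by omega) (x+1) (y+1) z w (by omega) rfl
  obtain ⟨a2, e2⟩ := ih _ (by omega) x y (z+1) (w+1) (by omega) rfl
  obtain ⟨a3, e3⟩ := ih _ (by omega) x (y+1) (z+1) w (by omega) rfl
  obtain ⟨a4, e4⟩ := ih _ (by omega) (x+1) y z (w+1) (by omega) rfl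
  obtain ⟨a5, e5⟩ := ih _ (by omega) (x+1) y (z+1) w (by omega) rfl
  refine ⟨max (a1 + a2) (a3 + a4) - a5, ?_⟩
  rw [e1, e2, e3, e4, e5] at a
  push_cast
  linarith

/-- The solution of the octahedron recurrence with values `H₁` on the face `w = 0` and `H₂` on the
face `y = 0`; on the edge common to both faces the value of `H₁` is used. -/
def oct (H₁ H₂ : ℕ → ℕ → ℕ → ℝ) : ℕ → ℕ → ℕ → ℕ → ℝ
  | x, y, z, 0 => H₁ x y z
  | x, 0, z, w+1 => H₂ x z (w+1)
  | x, y+1, z, w+1 =>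
    max (oct H₁ H₂ (x+1) (y+1) z w + oct H₁ H₂ x y (z+1) (w+1))
      (oct H₁ H₂ x (y+1) (z+1) w + oct H₁ H₂ (x+1) y z (w+1)) - oct H₁ H₂ (x+1) y (z+1) w
termination_by _ y _ w => y + w

theorem oct_face (H₁ H₂ : ℕ → ℕ → ℕ → ℝ) (x y z : ℕ) : oct H₁ H₂ x y z 0 = H₁ x y z := by
  rw [oct]

theorem oct_face_succ (H₁ H₂ : ℕ → ℕ → ℕ → ℝ) (x z w : ℕ) :
    oct H₁ H₂ x 0 z (w+1) = H₂ x z (w+1) := by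
  rw [oct]

theorem oct_step (H₁ H₂ : ℕ → ℕ → ℕ → ℝ) (x y z w : ℕ) :
    oct H₁ H₂ x (y+1) z (w+1) =
    max (oct H₁ H₂ (x+1) (y+1) z w + oct H₁ H₂ x y (z+1) (w+1))
      (oct H₁ H₂ x (y+1) (z+1) w + oct H₁ H₂ (x+1) y z (w+1)) - oct H₁ H₂ (x+1) y (z+1) w := by
  rw [oct]

theorem isOct_oct (n : ℕ) (H₁ H₂ : ℕ → ℕ → ℕ → ℝ) : IsOct n (oct H₁ H₂) := by
  intro x y z w _
  rw [oct_step]; ring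

/-! ### The tropical Laurent phenomenon -/

open Filter Topology in
/-- A sum of exponentials `∑ cₑ exp (s aₑ)` with distinct rates `aₑ` and nonzero (possibly negative)
coefficients that grows like `exp (s F)` up to bounded factors has largest rate `F`. -/
theorem growth_eq_sup' {ι : Type*} (E : Finset ι) (hE : E.Nonempty) (c a : ι → ℝ)
    (hc : ∀ e ∈ E, c e ≠ 0) (ha : Set.InjOn a E) (F C : ℝ)
    (hlo : ∀ s : ℝ, 0 < s → Real.exp (s * F - C) ≤ ∑ e ∈ E, c e * Real.exp (s * a e))
    (hhi : ∀ s : ℝ, 0 < s → ∑ e ∈ E, c e * Real.exp (s * a e) ≤ Real.exp (s * F + C)) :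
    F = E.sup' hE a := by
  classical
  obtain ⟨t, htE, ht⟩ := Finset.exists_mem_eq_sup' hE a
  rw [ht]
  have hle : ∀ e ∈ E, a e ≤ a t := fun e he => ht ▸ Finset.le_sup' a he
  have hexp : ∀ r : ℝ, r < 0 → Tendsto (fun s : ℝ => Real.exp (s * r)) atTop (𝓝 0) := fun r hr =>
    Real.tendsto_exp_atBot.comp ((tendsto_id.atTop_mul_const_of_neg hr))
  have hlim : Tendsto (fun s : ℝ => ∑ e ∈ E, c e * Real.exp (s * (a e - a t))) atTop
      (𝓝 (∑ e ∈ E, if e = t then c t else 0)) := by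
    refine tendsto_finsetSum _ fun e he => ?_
    by_cases h : e = t
    · subst h; simp
    · have hlt : a e - a t < 0 := by
        have := lt_of_le_of_ne (hle e he) (fun h' => h (ha he htE h'))
        linarith
      simpa [h] using (hexp _ hlt).const_mul (c e)
  rw [Finset.sum_ite_eq' E t, if_pos htE] at hlim
  have hsum : ∀ s : ℝ, ∑ e ∈ E, c e * Real.exp (s * (a e - a t)) =
      (∑ e ∈ E, c e * Real.exp (s * a e)) * Real.exp (-(s * a t)) := by
    intro s
    rw [Finset.sum_mul]
    refine Finset.sum_congr rfl fun e _ => ?_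
    rw [mul_assoc, ← Real.exp_add]; ring_nf
  have hlo' : ∀ᶠ s : ℝ in atTop, Real.exp (-C) * Real.exp (s * (F - a t)) ≤
      ∑ e ∈ E, c e * Real.exp (s * (a e - a t)) := by
    filter_upwards [eventually_gt_atTop 0] with s hs
    rw [hsum, ← Real.exp_add]
    refine le_trans (le_of_eq ?_) (mul_le_mul_of_nonneg_right (hlo s hs) (Real.exp_pos _).le)
    rw [← Real.exp_add]; ring_nf
  have hhi' : ∀ᶠ s : ℝ in atTop, ∑ e ∈ E, c e * Real.exp (s * (a e - a t)) ≤
      Real.exp C * Real.exp (s * (F - a t)) := by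
    filter_upwards [eventually_gt_atTop 0] with s hs
    rw [hsum, ← Real.exp_add]
    refine le_trans (mul_le_mul_of_nonneg_right (hhi s hs) (Real.exp_pos _).le) (le_of_eq ?_)
    rw [← Real.exp_add]; ring_nf
  -- after rescaling by `exp (-s a_t)` the sum has the finite nonzero limit `c_t`, so `F = a_t`
  rcases lt_trichotomy F (a t) with h | h | h
  · exfalso
    have h0 := hexp (F - a t) (by linarith)
    have : Tendsto (fun s : ℝ => ∑ e ∈ E, c e * Real.exp (s * (a e - a t))) atTop (𝓝 0) := by
      refine tendsto_of_tendsto_of_tendsto_of_le_of_le' ?_ ?_ hlo' hhi'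
      · simpa using h0.const_mul (Real.exp (-C))
      · simpa using h0.const_mul (Real.exp C)
    exact hc t htE (tendsto_nhds_unique hlim this)
  · exact h
  · exfalso
    have h0 : Tendsto (fun s : ℝ => Real.exp (-C) * Real.exp (s * (F - a t))) atTop atTop :=
      (Real.tendsto_exp_atTop.comp (tendsto_id.atTop_mul_const (sub_pos.2 h))).const_mul_atTop
        (Real.exp_pos _)
    exact not_tendsto_nhds_of_tendsto_atTop (tendsto_atTop_mono' _ hlo' h0) _ hlim

/-- Labels of the initial values of the recurrence: `inl` for the face `w = 0`, `inr` for `y = 0`. -/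
abbrev OctVar : Type := (ℕ × ℕ × ℕ) ⊕ (ℕ × ℕ × ℕ)

/-- The recurrence run on the initial values `d`. -/
def octOf (d : OctVar → ℝ) : ℕ → ℕ → ℕ → ℕ → ℝ :=
  oct (fun x y z => d (.inl (x, y, z))) (fun x z w => d (.inr (x, z, w)))

/-- The integral linear form `d ↦ ∑ᵢ eᵢ dᵢ`, as a function additive in the exponent vector `e`. -/
noncomputable def pairing (d : OctVar → ℝ) : (OctVar →₀ ℤ) →+ ℝ :=
  Finsupp.liftAddHom fun i => (AddMonoidHom.mulRight (d i)).comp (Int.castAddHom ℝ)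

theorem pairing_apply (d : OctVar → ℝ) (e : OctVar →₀ ℤ) :
    pairing d e = e.sum fun i k => (k : ℝ) * d i := rfl

theorem pairing_single (d : OctVar → ℝ) (i : OctVar) (k : ℤ) :
    pairing d (Finsupp.single i k) = k * d i := by
  rw [pairing_apply, Finsupp.sum_single_index]; simp

theorem pairing_smul (s : ℝ) (d : OctVar → ℝ) (e : OctVar →₀ ℤ) :
    pairing (s • d) e = s * pairing d e := by
  simp only [pairing_apply, Finsupp.sum, Finset.mul_sum, Pi.smul_apply, smul_eq_mul]
  exact Finset.sum_congr rfl fun _ _ => by ring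

theorem pairing_add (d v : OctVar → ℝ) (e : OctVar →₀ ℤ) :
    pairing (d + v) e = pairing d e + pairing v e := by
  simp only [pairing_apply, Finsupp.sum, ← Finset.sum_add_distrib, Pi.add_apply]
  exact Finset.sum_congr rfl fun _ _ => by ring

/-- Laurent polynomials in the initial values. -/
abbrev OctLaurent : Type := AddMonoidAlgebra ℝ (OctVar →₀ ℤ)

/-- Evaluation of Laurent polynomials at the point with coordinates `exp (d i)`. -/
noncomputable def evalExp (d : OctVar → ℝ) : OctLaurent →ₐ[ℝ] ℝ :=
  AddMonoidAlgebra.lift ℝ ℝ (OctVar →₀ ℤ)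
    { toFun := fun e => Real.exp (pairing d e.toAdd)
      map_one' := by simp
      map_mul' := fun e e' => by simp [Real.exp_add] }

theorem evalExp_apply (d : OctVar → ℝ) (f : OctLaurent) :
    evalExp d f = ∑ e ∈ f.coeff.support, f.coeff e * Real.exp (pairing d e) := by
  rw [evalExp, AddMonoidAlgebra.lift_apply]
  rfl

/-- The variable labelled `i`, as a unit of the Laurent polynomial ring. -/
noncomputable def octMono (i : OctVar) : OctLaurentˣ where
  val := AddMonoidAlgebra.single (Finsupp.single i 1) 1
  inv := AddMonoidAlgebra.single (Finsupp.single i (-1)) 1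
  val_inv := by
    rw [AddMonoidAlgebra.single_mul_single, ← Finsupp.single_add]
    simp [AddMonoidAlgebra.one_def]
  inv_val := by
    rw [AddMonoidAlgebra.single_mul_single, ← Finsupp.single_add]
    simp [AddMonoidAlgebra.one_def]

theorem evalExp_octMono (d : OctVar → ℝ) (i : OctVar) :
    evalExp d (octMono i : OctLaurent) = Real.exp (d i) := by
  simp [evalExp, octMono, pairing_single]

/-- The recurrence is positively homogeneous in the initial values. -/
theorem octOf_smul (s : ℝ) (hs : 0 < s) (d : OctVar → ℝ) (x y z w : ℕ) :
    octOf (s • d) x y z w = s * octOf d x y z w := by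
  induction hN : y + w using Nat.strong_induction_on generalizing x y z w with
  | _ N ih =>
  rcases w with _ | w
  · simp [octOf, oct_face]
  rcases y with _ | y
  · simp [octOf, oct_face_succ]
  unfold octOf at ih ⊢
  rw [oct_step, oct_step,
    ih _ (by omega) (x+1) (y+1) z w rfl, ih _ (by omega) x y (z+1) (w+1) rfl,
    ih _ (by omega) x (y+1) (z+1) w rfl, ih _ (by omega) (x+1) y z (w+1) rfl,
    ih _ (by omega) (x+1) y (z+1) w rfl, mul_sub, mul_max_of_nonneg _ _ hs.le, mul_add, mul_add]

theorem continuous_octOf (x y z w : ℕ) : Continuous fun d => octOf d x y z w := by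
  induction hN : y + w using Nat.strong_induction_on generalizing x y z w with
  | _ N ih =>
  rcases w with _ | w
  · simp only [octOf, oct_face]; fun_prop
  rcases y with _ | y
  · simp only [octOf, oct_face_succ]; fun_prop
  unfold octOf at ih ⊢
  simp only [oct_step]
  exact (((ih _ (by omega) (x+1) (y+1) z w rfl).add (ih _ (by omega) x y (z+1) (w+1) rfl)).max
    ((ih _ (by omega) x (y+1) (z+1) w rfl).add (ih _ (by omega) (x+1) y z (w+1) rfl))).sub
    (ih _ (by omega) (x+1) y (z+1) w rfl)

/-- The multiplicative recurrence at the point `exp d` stays within a bounded factor of the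
exponential of the tropical one, uniformly in `d`. -/
theorem octOf_close (n : ℕ) (g : ℕ → ℕ → ℕ → ℕ → OctLaurent)
    (g1 : ∀ x y z, x + y + z = n → ∀ d, evalExp d (g x y z 0) = Real.exp (octOf d x y z 0))
    (g2 : ∀ x z w, x + z + w = n → ∀ d, evalExp d (g x 0 z w) = Real.exp (octOf d x 0 z w))
    (g3 : ∀ x y z w, g x (y+1) z (w+1) * g (x+1) y (z+1) w =
        g (x+1) (y+1) z w * g x y (z+1) (w+1) + g x (y+1) (z+1) w * g (x+1) y z (w+1))
    (x y z w : ℕ) (h : x + y + z + w = n) :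
    ∃ C : ℝ, 0 ≤ C ∧ ∀ d, ∃ r, evalExp d (g x y z w) = Real.exp r ∧ |r - octOf d x y z w| ≤ C := by
  induction hN : y + w using Nat.strong_induction_on generalizing x y z w with
  | _ N ih =>
  rcases w with _ | w
  · exact ⟨0, le_rfl, fun d => ⟨_, g1 x y z (by omega) d, by simp⟩⟩
  rcases y with _ | y
  · exact ⟨0, le_rfl, fun d => ⟨_, g2 x z (w+1) (by omega) d, by simp⟩⟩
  obtain ⟨C1, p1, h1⟩ := ih _ (by omega) (x+1) (y+1) z w (by omega) rfl
  obtain ⟨C2, p2, h2⟩ := ih _ (by omega) x y (z+1) (w+1) (by omega) rfl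
  obtain ⟨C3, p3, h3⟩ := ih _ (by omega) x (y+1) (z+1) w (by omega) rfl
  obtain ⟨C4, p4, h4⟩ := ih _ (by omega) (x+1) y z (w+1) (by omega) rfl
  obtain ⟨C5, p5, h5⟩ := ih _ (by omega) (x+1) y (z+1) w (by omega) rfl
  have hl2 : 0 ≤ Real.log 2 := Real.log_nonneg (by norm_num)
  refine ⟨C1 + C2 + C3 + C4 + C5 + Real.log 2, by positivity, fun d => ?_⟩
  obtain ⟨r1, e1, b1⟩ := h1 d
  obtain ⟨r2, e2, b2⟩ := h2 d
  obtain ⟨r3, e3, b3⟩ := h3 d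
  obtain ⟨r4, e4, b4⟩ := h4 d
  obtain ⟨r5, e5, b5⟩ := h5 d
  have hg := congrArg (evalExp d) (g3 x y z w)
  simp only [map_mul, map_add, e1, e2, e3, e4, e5] at hg
  rw [← Real.exp_add, ← Real.exp_add] at hg
  set S := Real.exp (r1 + r2) + Real.exp (r3 + r4) with hS
  have hSpos : 0 < S := by positivity
  refine ⟨Real.log S - r5, ?_, ?_⟩
  · rw [Real.exp_sub, Real.exp_log hSpos, ← hg]
    field_simp
  have lo : max (r1 + r2) (r3 + r4) ≤ Real.log S := by
    rw [Real.le_log_iff_exp_le hSpos]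
    rcases max_choice (r1 + r2) (r3 + r4) with h | h <;> rw [h] <;>
      linarith [Real.exp_pos (r1 + r2), Real.exp_pos (r3 + r4)]
  have hi : Real.log S ≤ max (r1 + r2) (r3 + r4) + Real.log 2 := by
    rw [Real.log_le_iff_le_exp hSpos, Real.exp_add, Real.exp_log (by norm_num)]
    linarith [Real.exp_le_exp.2 (le_max_left (r1 + r2) (r3 + r4)),
      Real.exp_le_exp.2 (le_max_right (r1 + r2) (r3 + r4))]
  have hst : octOf d x (y+1) z (w+1) = _ := oct_step _ _ x y z w
  change _ = max (octOf d (x+1) (y+1) z w + octOf d x y (z+1) (w+1))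
      (octOf d x (y+1) (z+1) w + octOf d (x+1) y z (w+1)) - octOf d (x+1) y (z+1) w at hst
  rw [hst]
  have hm := abs_max_sub_max_le_max (r1 + r2) (r3 + r4)
    (octOf d (x+1) (y+1) z w + octOf d x y (z+1) (w+1))
    (octOf d x (y+1) (z+1) w + octOf d (x+1) y z (w+1))
  have hm2 : max |r1 + r2 - (octOf d (x+1) (y+1) z w + octOf d x y (z+1) (w+1))|
      |r3 + r4 - (octOf d x (y+1) (z+1) w + octOf d (x+1) y z (w+1))| ≤ C1 + C2 + C3 + C4 := by
    rw [abs_le] at b1 b2 b3 b4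
    refine max_le ?_ ?_ <;> rw [abs_le] <;> constructor <;> linarith
  have hm3 := hm.trans hm2
  rw [abs_le] at b5 hm3 ⊢
  constructor <;> linarith

/-- **Tropical Laurent phenomenon.** Every entry of the octahedron recurrence is a maximum of
finitely many integral linear forms in the initial values. -/
theorem octOf_eq_sup' (n x y z w : ℕ) (h : x + y + z + w = n) :
    ∃ (E : Finset (OctVar →₀ ℤ)) (hE : E.Nonempty),
      ∀ d, octOf d x y z w = E.sup' hE (pairing d) := by
  classical
  obtain ⟨g, g1, g2, g3⟩ := laurent_oct n (fun x y z => octMono (.inl (x, y, z)))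
    (fun x z w => if w = 0 then octMono (.inl (x, 0, z)) else octMono (.inr (x, z, w)))
    (by simp)
  obtain ⟨C, -, hC⟩ := octOf_close n g
    (fun x y z e d => by rw [g1 x y z e, evalExp_octMono, octOf, oct_face])
    (fun x z w e d => by
      rw [g2 x z w e]
      rcases w with _ | w
      · simp [evalExp_octMono, octOf, oct_face]
      · simp [evalExp_octMono, octOf, oct_face_succ])
    g3 x y z w h
  set E := (g x y z w).coeff.support with hEdef
  have hE : E.Nonempty := by
    by_contra hne
    rw [Finset.not_nonempty_iff_eq_empty] at hne
    obtain ⟨r, hr, -⟩ := hC 0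
    rw [evalExp_apply, ← hEdef, hne] at hr
    simpa using hr.trans_ne (Real.exp_pos r).ne'
  refine ⟨E, hE, ?_⟩
  -- the generic case: distinct forms take distinct values at `d`
  have generic : ∀ d, Set.InjOn (pairing d) E → octOf d x y z w = E.sup' hE (pairing d) := by
    intro d hd
    refine growth_eq_sup' E hE (g x y z w).coeff (pairing d)
      (fun e he => Finsupp.mem_support_iff.1 he) hd _ C ?_ ?_ <;> intro s hs <;>
    · obtain ⟨r, hr, hb⟩ := hC (s • d)
      rw [evalExp_apply] at hr
      simp only [pairing_smul] at hr
      rw [hr]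
      rw [octOf_smul s hs, abs_le] at hb
      exact Real.exp_le_exp.2 (by linarith)
  -- a direction along which every point is generic up to finitely many parameters
  obtain ⟨v, hv⟩ : ∃ v : OctVar → ℝ, ∀ p : E.offDiag, pairing v (p.1.1 - p.1.2) ≠ 0 := by
    let φ : E.offDiag → Module.Dual ℝ (OctVar → ℝ) := fun p =>
      { toFun := fun v => pairing v (p.1.1 - p.1.2)
        map_add' := fun a b => pairing_add a b _
        map_smul' := fun s a => pairing_smul s a _ }
    refine Module.Dual.exists_forall_ne_zero_of_forall_exists φ fun p => ?_
    have hne : p.1.1 - p.1.2 ≠ 0 := sub_ne_zero.2 (Finset.mem_offDiag.1 p.2).2.2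
    obtain ⟨i, hi⟩ := Finsupp.ne_iff.1 hne
    refine ⟨Pi.single i 1, ?_⟩
    change pairing _ _ ≠ 0
    rw [pairing_apply, Finsupp.sum, Finset.sum_eq_single i]
    · rw [Pi.single_eq_same, mul_one]; exact_mod_cast hi
    · intro j _ hj; simp [Pi.single_eq_of_ne hj]
    · intro hi'; simp [Finsupp.notMem_support_iff.1 hi']
  intro d
  have hbad : Set.Finite (⋃ p : E.offDiag,
      {ε : ℝ | pairing d (p.1.1 - p.1.2) + ε * pairing v (p.1.1 - p.1.2) = 0}) := by
    refine Set.finite_iUnion fun p => Set.Subsingleton.finite ?_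
    intro a ha b hb
    simp only [Set.mem_ofPred_eq] at ha hb
    exact mul_right_cancel₀ (hv p) (by linarith)
  -- both sides are continuous along the line and agree off finitely many of its points
  have hdense := hbad.countable.dense_compl ℝ
  have hc1 : Continuous fun ε : ℝ => octOf (d + ε • v) x y z w :=
    (continuous_octOf x y z w).comp (by fun_prop)
  have hc2 : Continuous fun ε : ℝ => E.sup' hE (pairing (d + ε • v)) := by
    have : (fun ε : ℝ => E.sup' hE (pairing (d + ε • v))) =
        fun ε : ℝ => E.sup' hE (fun e => pairing d e + ε * pairing v e) := by
      funext ε; congr 1; funext e; rw [pairing_add, pairing_smul]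
    rw [this]
    exact Continuous.finset_sup'_apply hE fun e _ => by fun_prop
  have := congrFun (Continuous.ext_on hdense hc1 hc2 fun ε hε => by
    apply generic
    intro a ha b hb hab
    by_contra hne
    apply hε
    refine Set.mem_iUnion.2 ⟨⟨(a, b), Finset.mem_offDiag.2 ⟨ha, hb, hne⟩⟩, ?_⟩
    simp only [pairing_add, pairing_smul] at hab
    simp only [Set.mem_ofPred_eq, map_sub]
    linarith) 0
  simpa using this

/-! ### Faces of the tetrahedron -/

theorem IsRealHive.congr {n : ℕ} {h h' : ℕ → ℕ → ℕ → ℝ} (hh : IsRealHive n h)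
    (e : ∀ x y z, x + y + z = n → h x y z = h' x y z) : IsRealHive n h' := by
  intro x y z hn
  have := hh x y z hn
  rwa [e (x+1) y (z+1) (by omega), e x (y+1) (z+1) (by omega), e (x+1) (y+1) z (by omega),
    e x y (z+2) (by omega), e (x+2) y z (by omega), e x (y+2) z (by omega)] at this

theorem IsRealHive.add_const {n : ℕ} {h : ℕ → ℕ → ℕ → ℝ} (hh : IsRealHive n h) (c : ℝ) :
    IsRealHive n (fun x y z => h x y z + c) := by
  intro x y z hn
  obtain ⟨h1, h2, h3⟩ := hh x y z hn
  exact ⟨by linarith, by linarith, by linarith⟩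

/-- The labeling `h` with its values off `tri_n` replaced by `0`. -/
def restrictTri (n : ℕ) (h : ℕ → ℕ → ℕ → ℝ) : ℕ → ℕ → ℕ → ℝ :=
  fun x y z => if x + y + z = n then h x y z else 0

theorem restrictTri_apply {n : ℕ} (h : ℕ → ℕ → ℕ → ℝ) {x y z : ℕ} (e : x + y + z = n) :
    restrictTri n h x y z = h x y z := if_pos e

theorem rOnTri_restrictTri (n : ℕ) (h : ℕ → ℕ → ℕ → ℝ) : ROnTri n (restrictTri n h) :=
  fun _ _ _ e => if_neg e

theorem IsRealHive.restrictTri {n : ℕ} {h : ℕ → ℕ → ℕ → ℝ} (hh : IsRealHive n h) :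
    IsRealHive n (restrictTri n h) :=
  hh.congr fun _ _ _ e => (restrictTri_apply h e).symm

theorem eq_restrictTri {n : ℕ} {h h' : ℕ → ℕ → ℕ → ℝ} (hn : ROnTri n h)
    (e : ∀ x y z, x + y + z = n → h' x y z = h x y z) : restrictTri n h' = h := by
  funext x y z
  by_cases hs : x + y + z = n
  · rw [restrictTri_apply _ hs, e x y z hs]
  · rw [hn x y z hs, rOnTri_restrictTri n h' x y z hs]

theorem RHasNWDiff.congr {n : ℕ} {h h' : ℕ → ℕ → ℕ → ℝ} {l : Fin n → ℝ} (hh : RHasNWDiff n h l)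
    (e : ∀ x y z, x + y + z = n → h x y z = h' x y z) : RHasNWDiff n h' l := fun j => by
  rw [hh j, e _ _ _ (by omega), e _ _ _ (by omega)]

theorem RHasNEDiff.congr {n : ℕ} {h h' : ℕ → ℕ → ℕ → ℝ} {l : Fin n → ℝ} (hh : RHasNEDiff n h l)
    (e : ∀ x y z, x + y + z = n → h x y z = h' x y z) : RHasNEDiff n h' l := fun j => by
  rw [hh j, e _ _ _ (by omega), e _ _ _ (by omega)]

theorem RHasSDiff.congr {n : ℕ} {h h' : ℕ → ℕ → ℕ → ℝ} {l : Fin n → ℝ} (hh : RHasSDiff n h l)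
    (e : ∀ x y z, x + y + z = n → h x y z = h' x y z) : RHasSDiff n h' l := fun j => by
  rw [hh j, e _ _ _ (by omega), e _ _ _ (by omega)]

theorem rSDiffOf_congr {n : ℕ} {h h' : ℕ → ℕ → ℕ → ℝ}
    (e : ∀ x y z, x + y + z = n → h x y z = h' x y z) : rSDiffOf n h = rSDiffOf n h' := by
  funext j
  rw [rSDiffOf, rSDiffOf, e _ _ _ (by omega), e _ _ _ (by omega)]

/-- Two sequences with the same initial term and the same differences agree. -/
theorem eq_of_diff_s10 {n : ℕ} {u v : ℕ → ℝ} (h0 : u 0 = v 0)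
    (h : ∀ j : Fin n, u (j.1+1) - u j.1 = v (j.1+1) - v j.1) (k : ℕ) (hk : k ≤ n) :
    u k = v k := by
  induction k with
  | zero => exact h0
  | succ k ih =>
    have := h ⟨k, hk⟩
    have := ih (by omega)
    simp only at *
    linarith

/-- A solution of the octahedron recurrence on the tetrahedron `x + y + z + w = n` whose four faces
are hives, with value `0` at `(n,0,0,0)` and prescribed differences along four of the six edges. -/
structure OctFilling (n : ℕ) (lam mu nu pi : Fin n → ℤ) (T : ℕ → ℕ → ℕ → ℕ → ℝ) : Prop where
  isOct : IsOct n T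
  hive_w : IsRealHive n (fun x y z => T x y z 0)
  hive_y : IsRealHive n (fun x z w => T x 0 z w)
  hive_x : IsRealHive n (fun y z w => T 0 y z w)
  hive_z : IsRealHive n (fun x y w => T x y 0 w)
  base : T n 0 0 0 = 0
  diff_lam : RHasNWDiff n (fun x y z => T x y z 0) (fun j => (lam j : ℝ))
  diff_mu : RHasNEDiff n (fun x y z => T x y z 0) (fun j => (mu j : ℝ))
  diff_nu : RHasNEDiff n (fun x z w => T x 0 z w) (fun j => (nu j : ℝ))
  diff_pi : RHasSDiff n (fun x z w => T x 0 z w) (fun j => (pi j : ℝ))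

/-- The faces `w = 0` and `y = 0`. -/
def facesA (n : ℕ) (T : ℕ → ℕ → ℕ → ℕ → ℝ) : (ℕ → ℕ → ℕ → ℝ) × (ℕ → ℕ → ℕ → ℝ) :=
  (restrictTri n fun x y z => T x y z 0, restrictTri n fun x z w => T x 0 z w)

/-- The faces `x = 0` and `z = 0`, the first one normalized to vanish at its first vertex. -/
def facesB (n : ℕ) (T : ℕ → ℕ → ℕ → ℕ → ℝ) : (ℕ → ℕ → ℕ → ℝ) × (ℕ → ℕ → ℕ → ℝ) :=
  (restrictTri n fun y z w => T 0 y z w - T 0 n 0 0, restrictTri n fun x y w => T x y 0 w)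

section Filling

variable {n : ℕ} {lam mu nu pi : Fin n → ℤ} {T U : ℕ → ℕ → ℕ → ℕ → ℝ}

theorem OctFilling.facesA_mem (hT : OctFilling n lam mu nu pi T) :
    facesA n T ∈ RPairSetA n lam mu nu pi := by
  have e1 := fun x y z (e : x + y + z = n) => (restrictTri_apply (fun x y z => T x y z 0) e).symm
  have e2 := fun x y z (e : x + y + z = n) => (restrictTri_apply (fun x z w => T x 0 z w) e).symm
  refine ⟨rOnTri_restrictTri _ _, hT.hive_w.restrictTri, ?_, rOnTri_restrictTri _ _,
    hT.hive_y.restrictTri, ?_, hT.diff_lam.congr e1, hT.diff_mu.congr e1, ?_,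
    hT.diff_nu.congr e2, hT.diff_pi.congr e2⟩
  · exact (e1 n 0 0 rfl).symm.trans hT.base
  · exact (e2 n 0 0 rfl).symm.trans hT.base
  · have : RHasNWDiff n (fun x z w => T x 0 z w) (rSDiffOf n (fun x y z => T x y z 0)) :=
      fun _ => rfl
    rw [rSDiffOf_congr e1] at this
    exact this.congr e2

theorem OctFilling.facesB_mem (hT : OctFilling n lam mu nu pi T) :
    facesB n T ∈ RPairSetB n lam mu nu pi := by
  have e1 := fun x y z (e : x + y + z = n) =>
    (restrictTri_apply (fun y z w => T 0 y z w - T 0 n 0 0) e).symm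
  have e2 := fun x y z (e : x + y + z = n) => (restrictTri_apply (fun x y w => T x y 0 w) e).symm
  refine ⟨rOnTri_restrictTri _ _, ?_, ?_, rOnTri_restrictTri _ _,
    hT.hive_z.restrictTri, ?_, RHasNWDiff.congr (fun j => ?_) e1,
    RHasNEDiff.congr (fun j => ?_) e1,
    RHasNWDiff.congr (fun j => hT.diff_lam j) e2, ?_, RHasSDiff.congr (fun j => hT.diff_pi j) e2⟩
  · exact IsRealHive.restrictTri (by simpa [← sub_eq_add_neg] using hT.hive_x.add_const (-T 0 n 0 0))
  · exact (e1 n 0 0 rfl).symm.trans (sub_self _)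
  · exact (e2 n 0 0 rfl).symm.trans hT.base
  · exact (hT.diff_mu j).trans (sub_sub_sub_cancel_right _ _ _).symm
  · exact (hT.diff_nu j).trans (sub_sub_sub_cancel_right _ _ _).symm
  · have : RHasNEDiff n (fun x y w => T x y 0 w)
        (rSDiffOf n (fun y z w => T 0 y z w - T 0 n 0 0)) :=
      fun _ => sub_sub_sub_cancel_right _ _ _
    rw [rSDiffOf_congr e1] at this
    exact this.congr e2

theorem OctFilling.eq_of_facesA (hT : OctFilling n lam mu nu pi T)
    (hU : OctFilling n lam mu nu pi U) (h : facesA n T = facesA n U)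
    (x y z w : ℕ) (hn : x + y + z + w = n) : T x y z w = U x y z w := by
  refine hT.isOct.unique hU.isOct (fun x y z e => ?_) (fun x z w e => ?_) x y z w hn
  · have := congrFun (congrFun (congrFun (congrArg Prod.fst h) x) y) z
    simpa [facesA, restrictTri_apply _ e] using this
  · have := congrFun (congrFun (congrFun (congrArg Prod.snd h) x) z) w
    simpa [facesA, restrictTri_apply _ e] using this

theorem OctFilling.eq_of_facesB (hT : OctFilling n lam mu nu pi T)
    (hU : OctFilling n lam mu nu pi U) (h : facesB n T = facesB n U)
    (x y z w : ℕ) (hn : x + y + z + w = n) : T x y z w = U x y z w := by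
  have hz : ∀ x y w, x + y + w = n → T x y 0 w = U x y 0 w := fun x y w e => by
    have := congrFun (congrFun (congrFun (congrArg Prod.snd h) x) y) w
    simpa [facesB, restrictTri_apply _ e] using this
  refine hT.isOct.flip.unique hU.isOct.flip (fun y x w e => hz x y w (by omega))
    (fun y w z e => ?_) y x w z (by omega)
  have := congrFun (congrFun (congrFun (congrArg Prod.fst h) y) z) w
  simp only [facesB, restrictTri_apply _ (show y + z + w = n by omega)] at this
  have := hz 0 n 0 (by omega)
  linarith

/-- If the two initial labelings agree on their common edge, `oct` restricts to `H₂` on `y = 0`. -/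
theorem oct_face_y {H₁ H₂ : ℕ → ℕ → ℕ → ℝ}
    (h : ∀ x z, x + z = n → H₁ x 0 z = H₂ x z 0) (x z w : ℕ) (e : x + z + w = n) :
    oct H₁ H₂ x 0 z w = H₂ x z w := by
  rcases w with _ | w
  · rw [oct_face, h x z (by omega)]
  · rw [oct_face_succ]

/-- The two hives of a pair in `A` agree on the edge along which their differences agree. -/
theorem edge_of_mem_A {P : (ℕ → ℕ → ℕ → ℝ) × (ℕ → ℕ → ℕ → ℝ)}
    (hP : P ∈ RPairSetA n lam mu nu pi) (x z : ℕ) (e : x + z = n) : P.1 x 0 z = P.2 x z 0 := by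
  obtain ⟨-, -, b1, -, -, b2, -, -, hd, -, -⟩ := hP
  have := eq_of_diff_s10 (n := n) (u := fun k => P.1 (n - k) 0 k) (v := fun k => P.2 (n - k) k 0)
    (by simp [b1, b2]) (fun j => hd j) z (by omega)
  simpa [show n - z = x by omega] using this

/-- For a pair in `B` the two hives agree along the common edge only up to the additive constant
`Q.2 0 n 0`, since `Q.1` is normalized at the vertex where `Q.2` has that value. -/
theorem edge_of_mem_B {Q : (ℕ → ℕ → ℕ → ℝ) × (ℕ → ℕ → ℕ → ℝ)}
    (hQ : Q ∈ RPairSetB n lam mu nu pi) (y w : ℕ) (e : y + w = n) :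
    Q.2 0 y w = Q.1 y 0 w + Q.2 0 n 0 := by
  obtain ⟨-, -, b1, -, -, b2, -, -, -, hd, -⟩ := hQ
  have := eq_of_diff_s10 (n := n) (u := fun k => Q.2 0 (n - k) k)
    (v := fun k => Q.1 (n - k) 0 k + Q.2 0 n 0)
    (by simp [b1]) (fun j => by rw [← hd j, rSDiffOf]; ring) w (by omega)
  simpa [show n - w = y by omega] using this

/-- Every pair in `A` is the pair of faces of the tetrahedron filled in from it. -/
theorem octFilling_of_mem_A {P : (ℕ → ℕ → ℕ → ℝ) × (ℕ → ℕ → ℕ → ℝ)}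
    (hP : P ∈ RPairSetA n lam mu nu pi) :
    OctFilling n lam mu nu pi (oct P.1 P.2) ∧ facesA n (oct P.1 P.2) = P := by
  have e1 : ∀ x y z, x + y + z = n → P.1 x y z = oct P.1 P.2 x y z 0 :=
    fun x y z _ => (oct_face _ _ x y z).symm
  have e2 : ∀ x z w, x + z + w = n → P.2 x z w = oct P.1 P.2 x 0 z w :=
    fun x z w e => (oct_face_y (edge_of_mem_A hP) x z w e).symm
  obtain ⟨o1, h1, b1, o2, h2, b2, d1, d2, d3, d4, d5⟩ := hP
  have hw := h1.congr e1
  have hy := h2.congr e2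
  obtain ⟨hx, hz⟩ := (isOct_oct n P.1 P.2).hive hw hy
  refine ⟨⟨isOct_oct _ _ _, hw, hy, hx, hz, ?_, d1.congr e1, d2.congr e1, d4.congr e2,
    d5.congr e2⟩, Prod.ext ?_ ?_⟩
  · rw [oct_face, b1]
  · exact eq_restrictTri o1 fun x y z e => (e1 x y z e).symm
  · exact eq_restrictTri o2 fun x y z e => (e2 x y z e).symm

/-- Every pair in `B` is the pair of bottom faces of a filling, obtained by running the recurrence in
the opposite direction, from the faces `z = 0` and `x = 0`. -/
theorem octFilling_of_mem_B {Q : (ℕ → ℕ → ℕ → ℝ) × (ℕ → ℕ → ℕ → ℝ)}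
    (hQ : Q ∈ RPairSetB n lam mu nu pi) :
    ∃ T, OctFilling n lam mu nu pi T ∧ facesB n T = Q := by
  set G := oct (fun y x w => Q.2 x y w) (fun y w z => Q.1 y z w + Q.2 0 n 0) with hG
  have e1 : ∀ x y w, x + y + w = n → Q.2 x y w = G y x w 0 :=
    fun x y w _ => (oct_face (fun y x w => Q.2 x y w) _ y x w).symm
  have e2 : ∀ y z w, y + z + w = n → Q.1 y z w + Q.2 0 n 0 = G y 0 w z :=
    fun y z w e => (oct_face_y (H₁ := fun y x w => Q.2 x y w)
      (H₂ := fun y w z => Q.1 y z w + Q.2 0 n 0) (edge_of_mem_B hQ) y w z (by omega)).symm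
  obtain ⟨o1, h1, b1, o2, h2, b2, d1, d2, d3, d4, d5⟩ := hQ
  have hz : IsRealHive n (fun x y w => G y x w 0) := h2.congr e1
  have hx : IsRealHive n (fun y z w => G y 0 w z) := (h1.add_const _).congr e2
  obtain ⟨hy, hw⟩ := (isOct_oct n _ _).hive hz.swap12 hx.swap23
  have hbase : G 0 n 0 0 = Q.2 n 0 0 := (e1 n 0 0 (by omega)).symm
  have hc : G n 0 0 0 = Q.2 0 n 0 := (e1 0 n 0 (by omega)).symm
  refine ⟨fun x y z w => G y x w z, ⟨(isOct_oct n _ _).flip, hw.swap12, hy.swap23, hx, hz,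
    hbase.trans b2, fun j => ?_, fun j => ?_, fun j => ?_, fun j => ?_⟩, Prod.ext ?_ ?_⟩
  · exact d3.congr e1 j
  · have hd : RHasNWDiff n (fun y z w => Q.1 y z w + Q.2 0 n 0) (fun j => (mu j : ℝ)) :=
      fun j => (d1 j).trans (add_sub_add_right_eq_sub _ _ _).symm
    exact hd.congr e2 j
  · have hd : RHasNEDiff n (fun y z w => Q.1 y z w + Q.2 0 n 0) (fun j => (nu j : ℝ)) :=
      fun j => (d2 j).trans (add_sub_add_right_eq_sub _ _ _).symm
    exact hd.congr e2 j
  · exact d5.congr e1 j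
  · refine eq_restrictTri o1 fun y z w e => ?_
    change G y 0 w z - G n 0 0 0 = _
    rw [← e2 y z w e, hc, add_sub_cancel_right]
  · exact eq_restrictTri o2 fun x y w e => (e1 x y w e).symm

/-- Integrality of the faces `w = 0`, `y = 0` is equivalent to integrality of the other two. -/
theorem OctFilling.integral_iff (hT : OctFilling n lam mu nu pi T) :
    ((∀ x y z, ∃ a : ℤ, (facesA n T).1 x y z = a) ∧ (∀ x y z, ∃ a : ℤ, (facesA n T).2 x y z = a)) ↔
    ((∀ x y z, ∃ a : ℤ, (facesB n T).1 x y z = a) ∧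
      (∀ x y z, ∃ a : ℤ, (facesB n T).2 x y z = a)) := by
  have key : ∀ h : ℕ → ℕ → ℕ → ℝ, (∀ x y z, ∃ a : ℤ, restrictTri n h x y z = a) ↔
      ∀ x y z, x + y + z = n → ∃ a : ℤ, h x y z = a := by
    refine fun h => ⟨fun H x y z e => restrictTri_apply h e ▸ H x y z, fun H x y z => ?_⟩
    by_cases e : x + y + z = n
    · rw [restrictTri_apply h e]; exact H x y z e
    · exact ⟨0, by rw [rOnTri_restrictTri n h x y z e, Int.cast_zero]⟩
  simp only [facesA, facesB, key]
  constructor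
  · rintro ⟨h1, h2⟩
    have := hT.isOct.integral h1 h2
    refine ⟨fun y z w e => ?_, fun x y w e => this x y 0 w (by omega)⟩
    obtain ⟨a, ha⟩ := this 0 y z w (by omega)
    obtain ⟨b, hb⟩ := this 0 n 0 0 (by omega)
    exact ⟨a - b, by rw [ha, hb, Int.cast_sub]⟩
  · rintro ⟨h1, h2⟩
    have := hT.isOct.flip.integral (fun y x w e => h2 x y w (by omega)) (fun y w z e => by
      obtain ⟨a, ha⟩ := h1 y z w (by omega)
      obtain ⟨b, hb⟩ := h2 0 n 0 (by omega)
      exact ⟨a + b, by rw [Int.cast_add, ← ha, ← hb, sub_add_cancel]⟩)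
    exact ⟨fun x y z e => this y x 0 z (by omega), fun x z w e => this 0 x w z (by omega)⟩

end Filling

/-- At initial values supported on `tri_n`, a linear form is a sum over `triPts n`. -/
theorem pairing_eq_sum (n : ℕ) {H₁ H₂ : ℕ → ℕ → ℕ → ℝ} (h1 : ROnTri n H₁) (h2 : ROnTri n H₂)
    (e : OctVar →₀ ℤ) :
    pairing (Sum.elim (fun p => H₁ p.1 p.2.1 p.2.2) (fun p => H₂ p.1 p.2.1 p.2.2)) e =
      ∑ p ∈ triPts n, ((e (.inl p) : ℝ) * H₁ p.1 p.2.1 p.2.2 +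
        (e (.inr p) : ℝ) * H₂ p.1 p.2.1 p.2.2) := by
  classical
  set d : OctVar → ℝ :=
    Sum.elim (fun p => H₁ p.1 p.2.1 p.2.2) (fun p => H₂ p.1 p.2.1 p.2.2) with hd
  have hmem : ∀ p : ℕ × ℕ × ℕ, p ∉ triPts n → p.1 + p.2.1 + p.2.2 ≠ n := by
    intro p hp h
    apply hp
    simp only [triPts, Finset.mem_filter, Finset.mem_product, Finset.mem_range]
    omega
  have hs : pairing d e = ∑ i ∈ (triPts n).disjSum (triPts n), (e i : ℝ) * d i := by
    rw [pairing_apply, Finsupp.sum,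
      Finset.sum_subset (Finset.subset_union_left (s₂ := (triPts n).disjSum (triPts n)))
        (fun i _ hi => by rw [Finsupp.notMem_support_iff.1 hi]; simp)]
    refine (Finset.sum_subset Finset.subset_union_right fun i _ hi => ?_).symm
    have : d i = 0 := by
      rcases i with p | p
      · exact h1 _ _ _ (hmem p fun h => hi (Finset.inl_mem_disjSum.2 h))
      · exact h2 _ _ _ (hmem p fun h => hi (Finset.inr_mem_disjSum.2 h))
    rw [this, mul_zero]
  rw [hs, Finset.sum_disjSum, Finset.sum_add_distrib]
  rfl

/-- Every entry of the recurrence, corrected by an integral multiple of one initial value, is a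
maximum of integral linear forms in the entries of the two initial labelings. -/
theorem oct_formula (n x y z w : ℕ) (h : x + y + z + w = n) (b : ℤ) :
    ∃ (m : ℕ) (c₁ c₂ : Fin (m+1) → ℕ × ℕ × ℕ → ℤ), ∀ H₁ H₂, ROnTri n H₁ → ROnTri n H₂ →
      oct H₁ H₂ x y z w - b * H₁ 0 n 0 = Finset.univ.sup' Finset.univ_nonempty
        (fun t => ∑ p ∈ triPts n, ((c₁ t p : ℝ) * H₁ p.1 p.2.1 p.2.2 +
          (c₂ t p : ℝ) * H₂ p.1 p.2.1 p.2.2)) := by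
  obtain ⟨E, hE, hsup⟩ := octOf_eq_sup' n x y z w h
  obtain ⟨m, hm⟩ := Nat.exists_eq_succ_of_ne_zero hE.card_pos.ne'
  let q : Fin (m+1) ≃ E := (E.equivFinOfCardEq hm).symm
  refine ⟨m, fun t p => (q t).1 (.inl p) - if p = (0, n, 0) then b else 0,
    fun t p => (q t).1 (.inr p), fun H₁ H₂ o1 o2 => ?_⟩
  have hform : ∀ t, ∑ p ∈ triPts n,
      ((((q t).1 (.inl p) - if p = (0, n, 0) then b else 0 : ℤ) : ℝ) * H₁ p.1 p.2.1 p.2.2 +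
        ((q t).1 (.inr p) : ℝ) * H₂ p.1 p.2.1 p.2.2) =
      pairing (Sum.elim (fun p => H₁ p.1 p.2.1 p.2.2) (fun p => H₂ p.1 p.2.1 p.2.2)) (q t).1
        - b * H₁ 0 n 0 := by
    intro t
    have hmem : (0, n, 0) ∈ triPts n := by simp [triPts]
    have hb : ∑ p ∈ triPts n, (if p = (0, n, 0) then (b : ℝ) * H₁ p.1 p.2.1 p.2.2 else 0) =
        b * H₁ 0 n 0 := by
      rw [Finset.sum_ite_eq_of_mem' _ _ _ hmem]
    rw [pairing_eq_sum n o1 o2, ← hb, ← Finset.sum_sub_distrib]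
    refine Finset.sum_congr rfl fun p _ => ?_
    split_ifs <;> push_cast <;> ring
  simp only [hform]
  have ho : oct H₁ H₂ x y z w = octOf
      (Sum.elim (fun p => H₁ p.1 p.2.1 p.2.2) (fun p => H₂ p.1 p.2.1 p.2.2)) x y z w := rfl
  rw [ho, hsup]
  apply le_antisymm
  · rw [sub_le_iff_le_add]
    refine Finset.sup'_le _ _ fun e he => ?_
    rw [← sub_le_iff_le_add]
    refine Finset.le_sup'_of_le _ (Finset.mem_univ (q.symm ⟨e, he⟩)) ?_
    simp
  · exact Finset.sup'_le _ _ fun t _ => sub_le_sub_right (Finset.le_sup' _ (q t).2) _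

/-- Excavation bijection: there is a bijection `Φ : A_ℝ → B_ℝ` each of whose
output entries is a maximum of finitely many `ℤ`-linear combinations of the
input entries (a tropical Laurent polynomial, hence continuous and piecewise
linear), and which restricts to a bijection between the integer-valued pairs
on the two sides. -/
theorem excavation_bijection (n : ℕ) (lam mu nu pi : Fin n → ℤ)
    (hlam : Antitone lam) (hmu : Antitone mu) (hnu : Antitone nu)
    (hpi : Antitone pi) :
    ∃ Φ : RPairSetA n lam mu nu pi → RPairSetB n lam mu nu pi,
      Function.Bijective Φ ∧
      (∀ x y z : ℕ, x + y + z = n → ∀ j : Bool,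
        ∃ (m : ℕ) (c₁ c₂ : Fin (m+1) → ℕ × ℕ × ℕ → ℤ),
          ∀ P : RPairSetA n lam mu nu pi,
            (if j then (Φ P).1.1 x y z else (Φ P).1.2 x y z) =
              Finset.univ.sup' Finset.univ_nonempty
                (fun t => ∑ p ∈ triPts n,
                  ((c₁ t p : ℝ) * P.1.1 p.1 p.2.1 p.2.2 +
                   (c₂ t p : ℝ) * P.1.2 p.1 p.2.1 p.2.2))) ∧
      (∀ P : RPairSetA n lam mu nu pi,
        ((∀ x y z : ℕ, ∃ a : ℤ, P.1.1 x y z = a) ∧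
         (∀ x y z : ℕ, ∃ a : ℤ, P.1.2 x y z = a)) ↔
        ((∀ x y z : ℕ, ∃ a : ℤ, (Φ P).1.1 x y z = a) ∧
         (∀ x y z : ℕ, ∃ a : ℤ, (Φ P).1.2 x y z = a))) := by
  refine ⟨fun P => ⟨facesB n (oct P.1.1 P.1.2), (octFilling_of_mem_A P.2).1.facesB_mem⟩,
    ⟨fun P Q hPQ => ?_, fun Q => ?_⟩, fun x y z e j => ?_, fun P => ?_⟩
  · obtain ⟨hP, fP⟩ := octFilling_of_mem_A P.2
    obtain ⟨hQ, fQ⟩ := octFilling_of_mem_A Q.2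
    have hTU := hP.eq_of_facesB hQ (congrArg Subtype.val hPQ)
    refine Subtype.ext ?_
    rw [← fP, ← fQ]
    refine Prod.ext (eq_restrictTri (rOnTri_restrictTri _ _) fun x y z e => ?_)
      (eq_restrictTri (rOnTri_restrictTri _ _) fun x z w e => ?_)
    · simp only [facesA, restrictTri_apply _ e]
      exact hTU x y z 0 e
    · simp only [facesA, restrictTri_apply _ e]
      exact hTU x 0 z w (by omega)
  · obtain ⟨T, hT, fT⟩ := octFilling_of_mem_B Q.2
    refine ⟨⟨facesA n T, hT.facesA_mem⟩, Subtype.ext ?_⟩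
    obtain ⟨hU, fU⟩ := octFilling_of_mem_A hT.facesA_mem
    have hTU := hU.eq_of_facesA hT fU
    rw [← fT]
    refine Prod.ext (eq_restrictTri (rOnTri_restrictTri _ _) fun y z w e => ?_)
      (eq_restrictTri (rOnTri_restrictTri _ _) fun x y w e => ?_)
    · simp only [facesB, restrictTri_apply _ e]
      rw [hTU 0 y z w (by omega), hTU 0 n 0 0 (by omega)]
    · simp only [facesB, restrictTri_apply _ e]
      exact hTU x y 0 w (by omega)
  · cases j with
    | true =>
      obtain ⟨m, c₁, c₂, hc⟩ := oct_formula n 0 x y z (by omega) 1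
      refine ⟨m, c₁, c₂, fun P => ?_⟩
      rw [← hc P.1.1 P.1.2 P.2.1 P.2.2.2.2.1]
      simp [facesB, restrictTri_apply _ e, oct_face]
    | false =>
      obtain ⟨m, c₁, c₂, hc⟩ := oct_formula n x y 0 z (by omega) 0
      refine ⟨m, c₁, c₂, fun P => ?_⟩
      rw [← hc P.1.1 P.1.2 P.2.1 P.2.2.2.2.1]
      simp [facesB, restrictTri_apply _ e]
  · obtain ⟨hP, fP⟩ := octFilling_of_mem_A P.2
    have := hP.integral_iff
    rwa [fP] at this
end
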